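/- Let p be a prime, let r be a positive integer with r < p, and let G be a subgroup of 𝔽_p*. Then the number of x ∈ 𝔽_p such that 1 + s·x ∈ G for every s = 1, 2, …, r is at least (|G|/(p−1))^r · p − r·√p. -/

import Mathlib

/-!
Detect membership in `G` by the characters `ψ ^ j` of `𝔽_q^*`, where `ψ` has order equal to the
index `d` of `G`. Expanding the product of the indicator functions gives `d ^ r` complete character
sums `∑ x, ∏ i, χ i (1 + s i * x)`; the trivial one contributes `q - r` or more, and every other one
is at most `(r - 1) * √q` by Weil's bound.

Weil's bound is proved as follows. The `L`-function of `g ↦ ∏ i, χ i (g (a i))` on monic polynomials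
`g` is a polynomial of degree less than `r`, because by Lagrange interpolation the values of `g` at
the `a i` are equidistributed once `r ≤ deg g`. Newton's identities express the character sums over
the extensions of degree `n` as power sums `-∑ i, α i ^ n` of its inverse roots. Over extensions of
even degree Stepanov's method bounds these sums by a constant times `√(q ^ n)`, and letting `n` grow
forces `‖α i‖ ≤ √q`.
-/

open Polynomial

namespace ShiftedProgression

section Kummer

/-- The root multiplicities of `H` generate the unit ideal modulo `d`; then `H` is not a proper
power up to constants, so that `y ^ d = H` defines an extension of full degree `d`. -/
def KummerPrimitive {F : Type*} [Field F] (d : ℕ) (H : F[X]) : Prop :=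
  ∀ n : ℕ, (∀ x : F, d ∣ n * H.rootMultiplicity x) → d ∣ n

theorem exists_pow_eq_pow_natDegree_minpoly {K L : Type*} [Field K] [Field L] [Algebra K L]
    {y : L} (hy : IsIntegral K y) {d : ℕ} {a : K} (h : y ^ d = algebraMap K L a) :
    ∃ w : K, w ^ d = a ^ (minpoly K y).natDegree := by
  refine ⟨Algebra.norm K (IntermediateField.AdjoinSimple.gen K y), ?_⟩
  have hgen : IntermediateField.AdjoinSimple.gen K y ^ d = algebraMap K _ a := Subtype.ext h
  rw [← map_pow, hgen, Algebra.norm_algebraMap, IntermediateField.adjoin.finrank hy]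

variable {F : Type*} [Field F] {d : ℕ} {H : F[X]}

theorem KummerPrimitive.dvd_of_pow_eq_pow (hH : KummerPrimitive d H) {n : ℕ} {w : F[X]}
    (h : w ^ d = H ^ n) : d ∣ n := by
  classical
  refine hH n fun x ↦ ⟨w.rootMultiplicity x, ?_⟩
  simpa only [← count_roots, roots_pow, Multiset.count_nsmul] using
    congrArg (rootMultiplicity x) h.symm

theorem KummerPrimitive.linearIndependent_pow_of_field (hH : KummerPrimitive d H) (hd : d ≠ 0)
    {L : Type*} [Field L] [Algebra F[X] L] [FaithfulSMul F[X] L] {y : L}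
    (hy : y ^ d = algebraMap F[X] L H) :
    LinearIndependent F[X] fun j : Fin d ↦ y ^ (j : ℕ) := by
  let : Algebra (FractionRing F[X]) L := FractionRing.liftAlgebra F[X] L
  have : IsScalarTower F[X] (FractionRing F[X]) L := FractionRing.isScalarTower_liftAlgebra _ _
  have hyH : y ^ d = algebraMap (FractionRing F[X]) L (algebraMap F[X] _ H) := by
    rw [hy, ← IsScalarTower.algebraMap_apply]
  have hint : IsIntegral (FractionRing F[X]) y :=
    IsIntegral.of_pow hd.bot_lt (hyH ▸ isIntegral_algebraMap)
  obtain ⟨w, hw⟩ := exists_pow_eq_pow_natDegree_minpoly hint hyH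
  set n := (minpoly (FractionRing F[X]) y).natDegree
  obtain ⟨v, rfl⟩ : ∃ v, algebraMap F[X] _ v = w :=
    IsIntegrallyClosed.exists_algebraMap_eq_of_isIntegral_pow hd.bot_lt
      (hw ▸ (isIntegral_algebraMap.pow _))
  have hdn : d ≤ n := by
    refine Nat.le_of_dvd (minpoly.natDegree_pos hint) (hH.dvd_of_pow_eq_pow (w := v) ?_)
    exact FaithfulSMul.algebraMap_injective F[X] (FractionRing F[X]) (by simpa using hw)
  exact ((_root_.linearIndependent_pow y).comp _ (Fin.castLE_injective hdn)).restrict_scalars'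
    F[X]

theorem KummerPrimitive.linearIndependent_pow (hH : KummerPrimitive d H) (hd : d ≠ 0)
    {Y : PowerSeries F} (hY : Y ^ d = algebraMap F[X] _ H) :
    LinearIndependent F[X] fun j : Fin d ↦ Y ^ (j : ℕ) := by
  let L := FractionRing (PowerSeries F)
  have : FaithfulSMul F[X] L := (faithfulSMul_iff_algebraMap_injective _ _).2 <| by
    rw [IsScalarTower.algebraMap_eq F[X] (PowerSeries F) L]
    exact (IsFractionRing.injective (PowerSeries F) L).comp (Polynomial.coe_injective F)
  have hyL : algebraMap _ L Y ^ d = algebraMap F[X] L H := by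
    rw [← map_pow, hY, ← IsScalarTower.algebraMap_apply]
  refine .of_comp (IsScalarTower.toAlgHom F[X] (PowerSeries F) L).toLinearMap ?_
  convert hH.linearIndependent_pow_of_field hd hyL
  simp

theorem exists_powerSeries_pow_eq (hd : (d : F) ≠ 0) {f : PowerSeries F}
    (hf : PowerSeries.constantCoeff f = 1) : ∃ Y : PowerSeries F, Y ^ d = f := by
  have hd₀ : d ≠ 0 := by
    rintro rfl
    simp at hd
  have henselian : HenselianRing (PowerSeries F) (Ideal.span {PowerSeries.X}) := inferInstance
  obtain ⟨Y, hY, -⟩ := henselian.is_henselian (X ^ d - C f) (monic_X_pow_sub_C f hd₀) 1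
    (by simp [Ideal.mem_span_singleton, PowerSeries.X_dvd_iff, hf])
    (.map _ (by simp [PowerSeries.isUnit_iff_constantCoeff, derivative_X_pow, hd]))
  exact ⟨Y, by simpa [IsRoot, sub_eq_zero] using hY⟩

end Kummer

section BoundedForms

variable {F S : Type*} [Field F] [CommRing S] [Algebra F S] [Algebra F[X] S]
  [IsScalarTower F F[X] S] {d : ℕ} {y : S} {H : F[X]}

variable (F) in
/-- The elements `∑ j < d, f j * y ^ j` with coefficients `f j : F[X]` of degree less than `k`:
the finite-dimensional spaces from which the auxiliary functions of Stepanov's method are taken. -/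
noncomputable def boundedForms (y : S) (d k : ℕ) : Submodule F S :=
  LinearMap.range <|
    (Fintype.linearCombination F[X] fun j : Fin d ↦ y ^ (j : ℕ)).restrictScalars F ∘ₗ
      LinearMap.piMap fun _ ↦ (degreeLT F k).subtype

theorem finrank_degreeLT (k : ℕ) : Module.finrank F (degreeLT F k) = k := by
  simpa using (degreeLTEquiv F k).finrank_eq

instance (k : ℕ) : Module.Finite F (boundedForms F y d k) :=
  Module.Finite.range _

theorem finrank_boundedForms (hy : LinearIndependent F[X] fun j : Fin d ↦ y ^ (j : ℕ)) (k : ℕ) :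
    Module.finrank F (boundedForms F y d k) = d * k := by
  rw [boundedForms, LinearMap.finrank_range_of_inj, Module.finrank_pi_fintype]
  · simp [finrank_degreeLT]
  · exact (linearIndependent_iff_injective_fintypeLinearCombination.1 hy).comp
      (Function.Injective.piMap fun _ ↦ Subtype.val_injective)

theorem mem_boundedForms {k : ℕ} {u : S} : u ∈ boundedForms F y d k ↔
    ∃ f : Fin d → F[X], (∀ j, f j ∈ degreeLT F k) ∧ ∑ j, f j • y ^ (j : ℕ) = u := by
  refine ⟨?_, ?_⟩
  · rintro ⟨f, rfl⟩
    exact ⟨fun j ↦ f j, fun j ↦ (f j).2, rfl⟩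
  · rintro ⟨f, hf, rfl⟩
    exact ⟨fun j ↦ ⟨f j, hf j⟩, rfl⟩

theorem boundedForms_mono {k l : ℕ} (h : k ≤ l) :
    boundedForms F y d k ≤ boundedForms F y d l := fun _ hu ↦ by
  obtain ⟨f, hf, rfl⟩ := mem_boundedForms.1 hu
  exact mem_boundedForms.2 ⟨f, fun j ↦ degreeLT_mono h (hf j), rfl⟩

theorem smul_pow_mem_boundedForms {k j : ℕ} {f : F[X]} (hf : f ∈ degreeLT F k) (hj : j < d) :
    f • y ^ j ∈ boundedForms F y d k := by
  classical
  refine mem_boundedForms.2 ⟨Pi.single ⟨j, hj⟩ f, fun i ↦ ?_, ?_⟩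
  · obtain rfl | hi := eq_or_ne i ⟨j, hj⟩
    · simpa using hf
    · simp [hi]
  · rw [Finset.sum_eq_single ⟨j, hj⟩] <;> simp +contextual

theorem mul_mem_degreeLT {k n : ℕ} {f g : F[X]} (hf : f ∈ degreeLT F k) (hg : g.degree ≤ n) :
    f * g ∈ degreeLT F (k + n) := by
  rw [mem_degreeLT] at *
  calc (f * g).degree = f.degree + g.degree := degree_mul
    _ ≤ f.degree + n := by gcongr
    _ < k + n := WithBot.add_lt_add_right (WithBot.coe_ne_bot) hf

theorem smul_pow_mem_boundedForms_of_lt_two_mul (hy : y ^ d = algebraMap F[X] S H) {k j : ℕ}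
    {f : F[X]} (hf : f ∈ degreeLT F k) (hj : j < 2 * d) :
    f • y ^ j ∈ boundedForms F y d (k + H.natDegree) := by
  obtain hj' | hj' := lt_or_ge j d
  · exact boundedForms_mono (Nat.le_add_right ..) (smul_pow_mem_boundedForms hf hj')
  · have hfH : f * H ∈ degreeLT F (k + H.natDegree) := mul_mem_degreeLT hf degree_le_natDegree
    convert smul_pow_mem_boundedForms (y := y) hfH (show j - d < d by lia) using 1
    rw [mul_smul, algebra_compatible_smul S H, ← hy, smul_eq_mul, ← pow_add,
      Nat.add_sub_cancel' hj']

theorem mul_mem_boundedForms (hy : y ^ d = algebraMap F[X] S H) {k l : ℕ} {u v : S}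
    (hu : u ∈ boundedForms F y d k) (hv : v ∈ boundedForms F y d l) :
    u * v ∈ boundedForms F y d (k + l + H.natDegree) := by
  obtain ⟨f, hf, rfl⟩ := mem_boundedForms.1 hu
  obtain ⟨g, hg, rfl⟩ := mem_boundedForms.1 hv
  rw [Finset.sum_mul_sum]
  refine Submodule.sum_mem _ fun i _ ↦ Submodule.sum_mem _ fun j _ ↦ ?_
  rw [smul_mul_smul_comm, ← pow_add]
  have hfg : f i * g j ∈ degreeLT F (k + l) :=
    mul_mem_degreeLT (hf i) (mem_degreeLT.1 (hg j)).le
  exact smul_pow_mem_boundedForms_of_lt_two_mul hy hfg (by lia)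

theorem algebraMap_mem_boundedForms (hd : d ≠ 0) {k : ℕ} {f : F[X]} (hf : f ∈ degreeLT F k) :
    algebraMap F[X] S f ∈ boundedForms F y d k := by
  simpa [Algebra.algebraMap_eq_smul_one] using
    smul_pow_mem_boundedForms (y := y) hf (Nat.pos_of_ne_zero hd)

theorem pow_mem_boundedForms (hd : d ≠ 0) (hy : y ^ d = algebraMap F[X] S H) {k : ℕ} {u : S}
    (hu : u ∈ boundedForms F y d k) (n : ℕ) :
    u ^ n ∈ boundedForms F y d (n * (k + H.natDegree) + 1) := by
  induction n with
  | zero =>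
    rw [pow_zero, ← map_one (algebraMap F[X] S)]
    exact algebraMap_mem_boundedForms hd (by simp [mem_degreeLT])
  | succ n ih =>
    rw [pow_succ]
    exact boundedForms_mono (by grind) (mul_mem_boundedForms hy ih hu)

theorem exists_dvd_algebraMap_of_mem_boundedForms [IsDomain S] (hd : d ≠ 0)
    (hyd : y ^ d = algebraMap F[X] S H)
    (hy : LinearIndependent F[X] fun j : Fin d ↦ y ^ (j : ℕ)) {l : ℕ} {u : S} (hu₀ : u ≠ 0)
    (hu : u ∈ boundedForms F y d l) :
    ∃ f : F[X], f ≠ 0 ∧ f ∈ degreeLT F ((d + 1) * (l + H.natDegree)) ∧ u ∣ algebraMap F[X] S f := by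
  set D := H.natDegree
  set K := (d + 1) * (l + D)
  have hl : l ≠ 0 := by
    rintro rfl
    obtain ⟨f, hf, rfl⟩ := mem_boundedForms.1 hu
    have hf₀ (j) : f j = 0 := by simpa [mem_degreeLT] using hf j
    exact hu₀ (by simp [hf₀])
  let T : boundedForms F y d (d * (l + D)) × degreeLT F K →ₗ[F] boundedForms F y d K :=
    (((LinearMap.mulLeft F u).restrict fun v hv ↦
        boundedForms_mono (by grind) (mul_mem_boundedForms hyd hu hv)).coprod
      ((IsScalarTower.toAlgHom F F[X] S).toLinearMap.restrict fun f hf ↦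
        algebraMap_mem_boundedForms hd hf))
  have hT : LinearMap.ker T ≠ ⊥ := by
    apply LinearMap.ker_ne_bot_of_finrank_lt
    rw [Module.finrank_prod, finrank_boundedForms hy, finrank_boundedForms hy, finrank_degreeLT]
    have : 0 < l + D := by lia
    grind
  obtain ⟨⟨v, f⟩, hvf, hne⟩ := (Submodule.ne_bot_iff _).1 hT
  have huv : u * v + algebraMap F[X] S f = 0 := congrArg Subtype.val hvf
  refine ⟨f, fun hf₀ ↦ hne ?_, f.2, -v, by linear_combination huv⟩
  have hv₀ : (v : S) = 0 := by simpa [hf₀, hu₀] using huv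
  exact Prod.ext (Subtype.ext hv₀) (Subtype.ext hf₀)

end BoundedForms

section PowerSeriesOrder

variable {F : Type*} [Field F]

theorem sum_ne_zero_of_injOn_order {R ι : Type*} [Semiring R] {s : Finset ι}
    {f : ι → PowerSeries R} (hf : Set.InjOn (fun i ↦ (f i).order) s)
    (hne : ∃ i ∈ s, f i ≠ 0) : ∑ i ∈ s, f i ≠ 0 := by
  obtain ⟨j, hj, hjmin⟩ := s.exists_min_image (fun i ↦ (f i).order)
    (hne.imp fun i hi ↦ hi.1)
  obtain ⟨i, hi, hi₀⟩ := hne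
  have hj₀ : f j ≠ 0 := fun h ↦ hi₀ (by simpa [h] using hjmin i hi)
  set n := (f j).order.toNat with hn
  have hcoeff : PowerSeries.coeff n (∑ i ∈ s, f i) = PowerSeries.coeff n (f j) := by
    rw [map_sum, Finset.sum_eq_single_of_mem j hj fun i hi hij ↦ ?_]
    refine PowerSeries.coeff_of_lt_order _ ?_
    rw [hn, PowerSeries.coe_toNat_order hj₀]
    exact (hjmin i hi).lt_of_ne fun h ↦ hij (hf hi hj h.symm)
  intro hsum
  exact PowerSeries.coeff_order hj₀ (by rw [← hn, ← hcoeff, hsum, map_zero])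

theorem sum_mul_pow_ne_zero {R ι : Type*} [Ring R] [IsDomain R] [Fintype ι] {o : ι → ℕ}
    (ho : Function.Injective o) {u s : ι → PowerSeries R} {P : ℕ} (hs : ∀ i, (s i).order = o i)
    (hu : ∀ i, u i ≠ 0 → (u i).order < P) (hne : u ≠ 0) : ∑ i, u i * s i ^ P ≠ 0 := by
  classical
  have hs₀ (i) : s i ≠ 0 := fun h ↦ by simpa [h] using hs i
  rw [← Finset.sum_filter_of_ne (p := fun i ↦ u i ≠ 0) fun i _ h ↦ left_ne_zero_of_mul h]
  refine sum_ne_zero_of_injOn_order (fun i hi j hj h ↦ ho ?_) ?_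
  · obtain ⟨-, hui⟩ := Finset.mem_filter.1 hi
    obtain ⟨-, huj⟩ := Finset.mem_filter.1 hj
    have hlti := hu i hui
    have hltj := hu j huj
    simp only [PowerSeries.order_mul, PowerSeries.order_pow, hs, nsmul_eq_mul] at h
    rw [← PowerSeries.coe_toNat_order hui] at h hlti
    rw [← PowerSeries.coe_toNat_order huj] at h hltj
    norm_cast at h hlti hltj
    simpa [Nat.add_mul_div_left _ _ (by lia : 0 < P), Nat.div_eq_of_lt, hlti, hltj] using
      congrArg (· / P) h
  · obtain ⟨i, hui⟩ := Function.ne_iff.1 hne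
    exact ⟨i, by simpa using hui, mul_ne_zero hui (pow_ne_zero _ (hs₀ i))⟩

theorem exists_finset_orders (V : Submodule F (PowerSeries F)) :
    ∃ O : Finset ℕ, Module.finrank F V ≤ O.card ∧ ∀ o ∈ O, ∃ v ∈ V, v.order = o := by
  let orders : Set ℕ := {o | ∃ v ∈ V, v.order = o}
  obtain hfin | hinf := orders.finite_or_infinite
  · refine ⟨hfin.toFinset, ?_, fun o ho ↦ hfin.mem_toFinset.1 ho⟩
    let coeffs : V →ₗ[F] hfin.toFinset → F :=
      LinearMap.pi fun o ↦ PowerSeries.coeff (o : ℕ) ∘ₗ V.subtype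
    have hinj : Function.Injective coeffs := by
      refine (injective_iff_map_eq_zero coeffs).2 fun v hv ↦ ?_
      by_contra hv₀
      have hv₀' : (v : PowerSeries F) ≠ 0 := by simpa using hv₀
      have hmem : (v : PowerSeries F).order.toNat ∈ hfin.toFinset :=
        hfin.mem_toFinset.2 ⟨v, v.2, (PowerSeries.coe_toNat_order hv₀').symm⟩
      exact PowerSeries.coeff_order hv₀' (congrFun hv ⟨_, hmem⟩)
    simpa using LinearMap.finrank_le_finrank_of_injective hinj
  · obtain ⟨O, hO, hcard⟩ := hinf.exists_subset_card_eq (Module.finrank F V)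
    exact ⟨O, hcard.ge, fun o ho ↦ hO ho⟩

end PowerSeriesOrder

section Stepanov

variable {F : Type*} [Field F] {d : ℕ} {H : F[X]}

theorem exists_sum_pow_mul_eq_zero {S : Type*} [CommRing S] [Algebra F S] [Algebra F[X] S]
    [IsScalarTower F F[X] S] [Finite F] {p : ℕ} [ExpChar S p] (hd : d ≠ 0) {y : S}
    (hyd : y ^ d = algebraMap F[X] S H)
    (hy : LinearIndependent F[X] fun j : Fin d ↦ y ^ (j : ℕ)) {l m μ : ℕ} {ι : Type*}
    [Fintype ι] {s : ι → S} (hs : ∀ i, s i ∈ boundedForms F y d m)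
    (hι : p ^ μ * (l + H.natDegree) + 1 + m + H.natDegree < l * Fintype.card ι) :
    ∃ u : ι → S, u ≠ 0 ∧ (∀ i, u i ∈ boundedForms F y d l) ∧ ∑ i, u i ^ p ^ μ * s i = 0 := by
  set k := p ^ μ * (l + H.natDegree) + 1 + m + H.natDegree
  let Θ : (ι → boundedForms F y d l) →+ S :=
    ∑ i, ((AddMonoidHom.mulRight (s i)).comp (iterateFrobenius S p μ).toAddMonoidHom).comp
      ((boundedForms F y d l).subtype.toAddMonoidHom.comp (Pi.evalAddMonoidHom _ i))
  have hΘ (u) : Θ u = ∑ i, (u i : S) ^ p ^ μ * s i := by simp [Θ, iterateFrobenius_def]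
  have hΘmem (u) : Θ u ∈ boundedForms F y d k := by
    rw [hΘ]
    exact Submodule.sum_mem _ fun i _ ↦
      mul_mem_boundedForms hyd (pow_mem_boundedForms hd hyd (u i).2 _) (hs i)
  have hcard : Nat.card (boundedForms F y d k) < Nat.card (ι → boundedForms F y d l) := by
    rw [Module.natCard_eq_pow_finrank (K := F) (V := boundedForms F y d k),
      Module.natCard_eq_pow_finrank (K := F) (V := ι → boundedForms F y d l)]
    refine Nat.pow_lt_pow_right (Finite.one_lt_card (α := F)) ?_
    simp only [Module.finrank_pi_fintype, finrank_boundedForms hy, Finset.sum_const,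
      Finset.card_univ, smul_eq_mul]
    nlinarith [Nat.pos_of_ne_zero hd]
  have hΘker : ∃ u, Θ u = 0 ∧ u ≠ 0 := by
    by_contra! h
    have : Finite (boundedForms F y d k) := Module.finite_of_finite F
    exact hcard.not_ge <| Nat.card_le_card_of_injective (fun u ↦ ⟨Θ u, hΘmem u⟩) fun u v huv ↦
      (injective_iff_map_eq_zero Θ).2 h (congrArg Subtype.val huv)
  obtain ⟨u, hu, hu₀⟩ := hΘker
  refine ⟨fun i ↦ u i, fun h ↦ hu₀ ?_, fun i ↦ (u i).2, hΘ u ▸ hu⟩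
  exact funext fun i ↦ Subtype.ext (congrFun h i)

/-- Specialisation of the superelliptic ring `F[X][y] / (y ^ d - H)` at the point `x`. -/
noncomputable def specialize (d : ℕ) (H : F[X]) (x : F) :
    AdjoinRoot (X ^ d - C H) →+* AdjoinRoot (X ^ d - C (H.eval x)) :=
  AdjoinRoot.map (evalRingHom x) _ _ (by simp)

theorem root_pow_eq {R : Type*} [CommRing R] (d : ℕ) (a : R) :
    AdjoinRoot.root (X ^ d - C a) ^ d = algebraMap R _ a := by
  have h := AdjoinRoot.eval₂_root (X ^ d - C a)
  rwa [eval₂_sub, eval₂_X_pow, eval₂_C, sub_eq_zero] at h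

theorem linearIndependent_root_pow {R : Type*} [CommRing R] [Nontrivial R] {d : ℕ} (hd : d ≠ 0)
    (a : R) :
    LinearIndependent R fun j : Fin d ↦ AdjoinRoot.root (X ^ d - C a) ^ (j : ℕ) := by
  have h := (AdjoinRoot.powerBasis' (monic_X_pow_sub_C a hd)).basis.linearIndependent
  rw [PowerBasis.coe_basis, AdjoinRoot.powerBasis'_gen] at h
  exact h.comp (Fin.cast (by simp)) (Fin.cast_injective _)

theorem pow_card_eq_self_of_pow_eq_one [Fintype F] {e : ℕ} (hde : Fintype.card F = d * e + 1)
    {a : F} (ha : a ^ e = 1) (z : AdjoinRoot (X ^ d - C a)) :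
    z ^ Fintype.card F = z := by
  have : FiniteField.frobeniusAlgHom F (AdjoinRoot (X ^ d - C a)) = AlgHom.id F _ := by
    refine AdjoinRoot.algHom_ext ?_
    have hroot := root_pow_eq d a
    simp [hde, pow_succ, pow_mul, hroot, ← map_pow, ha]
  exact congrArg (· z) this

theorem card_lt_of_specialize_eq_zero (hd : d ≠ 0) {k : ℕ} {Ψ : AdjoinRoot (X ^ d - C H)}
    (hΨ₀ : Ψ ≠ 0) (hΨ : Ψ ∈ boundedForms F (AdjoinRoot.root (X ^ d - C H)) d k) {Z : Finset F}
    (hZ : ∀ x ∈ Z, specialize d H x Ψ = 0) : Z.card < k := by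
  obtain ⟨f, hf, rfl⟩ := mem_boundedForms.1 hΨ
  obtain ⟨j, -, hj⟩ := Finset.exists_ne_zero_of_sum_ne_zero hΨ₀
  have hfj : f j ≠ 0 := fun h ↦ hj (by simp [h])
  refine lt_of_not_ge fun hcard ↦ hfj ?_
  refine eq_zero_of_degree_lt_of_eval_finset_eq_zero Z ?_ fun x hx ↦ ?_
  · exact (mem_degreeLT.1 (hf j)).trans_le (by exact_mod_cast hcard)
  · have h := hZ x hx
    replace h : ∑ i, (f i).eval x • AdjoinRoot.root (X ^ d - C (H.eval x)) ^ (i : ℕ) = 0 := by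
      simpa [specialize, Algebra.smul_def, AdjoinRoot.algebraMap_eq] using h
    have hroot := linearIndependent_root_pow hd (H.eval x)
    exact Fintype.linearIndependent_iff.1 hroot (fun i ↦ (f i).eval x) h j

/-- The expansion of `AdjoinRoot (X ^ d - C H)` at the place where `y` takes the value of the power
series `Y`. -/
noncomputable def expansion {Y : PowerSeries F} (hY : Y ^ d = algebraMap F[X] _ H) :
    AdjoinRoot (X ^ d - C H) →ₐ[F[X]] PowerSeries F :=
  AdjoinRoot.liftAlgHom _ (Algebra.ofId _ _) Y
    (by simp [eval₂_sub, eval₂_X_pow, eval₂_C, hY])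

theorem expansion_injective (hd : d ≠ 0) (hH : KummerPrimitive d H) {Y : PowerSeries F}
    (hY : Y ^ d = algebraMap F[X] _ H) : Function.Injective (expansion hY) := by
  let pb := AdjoinRoot.powerBasis' (monic_X_pow_sub_C H hd)
  have hli : LinearIndependent F[X] fun j : Fin pb.dim ↦ Y ^ (j : ℕ) :=
    (hH.linearIndependent_pow hd hY).comp (Fin.cast (by simp [pb])) (Fin.cast_injective _)
  have hexp : (expansion hY).toLinearMap = pb.basis.constr F[X] fun j ↦ Y ^ (j : ℕ) :=
    pb.basis.ext fun j ↦ by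
      rw [pb.basis.constr_basis, pb.coe_basis]
      simp [pb, expansion, AdjoinRoot.powerBasis'_gen]
  have hinj := pb.basis.injective_constr_of_linearIndependent (R₂ := F[X]) hli
  rwa [← hexp] at hinj

section Auxiliary

variable {S : Type*} [CommRing S] [Algebra F S] [Algebra F[X] S] [IsScalarTower F F[X] S]
  {y : S}

theorem order_lt_of_mem_boundedForms [IsDomain S] (hd : d ≠ 0) (hyd : y ^ d = algebraMap F[X] S H)
    (hy : LinearIndependent F[X] fun j : Fin d ↦ y ^ (j : ℕ)) (φ : S →ₐ[F[X]] PowerSeries F)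
    {l : ℕ} {u : S} (hu : u ∈ boundedForms F y d l) (hu₀ : u ≠ 0) :
    (φ u).order < ((d + 1) * (l + H.natDegree) : ℕ) := by
  obtain ⟨f, hf₀, hf, hdvd⟩ := exists_dvd_algebraMap_of_mem_boundedForms hd hyd hy hu₀ hu
  obtain ⟨v, hv⟩ := map_dvd φ hdvd
  rw [AlgHom.commutes] at hv
  have hfv : (f : PowerSeries F) = φ u * v := hv
  calc (φ u).order ≤ (φ u).order + v.order := le_self_add
    _ = (f : PowerSeries F).order := by rw [hfv, PowerSeries.order_mul]
    _ ≤ f.natDegree := PowerSeries.order_le _ (by simpa using hf₀)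
    _ < _ := by exact_mod_cast (natDegree_lt_iff_degree_lt hf₀).2 (mem_degreeLT.1 hf)

theorem exists_boundedForms_order_eq
    (hy : LinearIndependent F[X] fun j : Fin d ↦ y ^ (j : ℕ)) {φ : S →ₐ[F[X]] PowerSeries F}
    (hφ : Function.Injective φ) (m : ℕ) :
    ∃ (O : Finset ℕ) (s : O → S), d * m ≤ Fintype.card O ∧
      (∀ o, s o ∈ boundedForms F y d m) ∧ ∀ o, (φ (s o)).order = (o : ℕ) := by
  let f : boundedForms F y d m →ₗ[F] PowerSeries F :=
    (φ.restrictScalars F).toLinearMap ∘ₗ (boundedForms F y d m).subtype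
  have hf : Function.Injective f := hφ.comp Subtype.val_injective
  obtain ⟨O, hO, hOf⟩ := exists_finset_orders (LinearMap.range f)
  rw [LinearMap.finrank_range_of_inj hf, finrank_boundedForms hy] at hO
  have hs (o : O) : ∃ s ∈ boundedForms F y d m, (φ s).order = (o : ℕ) := by
    obtain ⟨_, ⟨s, rfl⟩, hs⟩ := hOf o o.2
    exact ⟨s, s.2, hs⟩
  choose s hsm hso using hs
  exact ⟨O, s, by simpa using hO, hsm, hso⟩

-- Stepanov's construction, with `P = p ^ μ`: at a point with coordinates in the field of `P ^ 2`
-- elements, the `P`-th power of `∑ u o * s o ^ P` is `∑ u o ^ P * s o = 0`, so the non-zero form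
-- `∑ u o * s o ^ P` vanishes there.
theorem exists_stepanov_family [IsDomain S] [Finite F] {p μ : ℕ} [ExpChar S p] (hd : d ≠ 0)
    (hyd : y ^ d = algebraMap F[X] S H)
    (hy : LinearIndependent F[X] fun j : Fin d ↦ y ^ (j : ℕ)) {φ : S →ₐ[F[X]] PowerSeries F}
    (hφ : Function.Injective φ) {l m : ℕ} (hl : (d + 1) * (l + H.natDegree) ≤ p ^ μ)
    (hlm : p ^ μ * (l + H.natDegree) + 1 + m + H.natDegree < l * (d * m)) :
    ∃ (O : Finset ℕ) (u s : O → S), ∑ o, u o ^ p ^ μ * s o = 0 ∧ ∑ o, u o * s o ^ p ^ μ ≠ 0 ∧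
      ∑ o, u o * s o ^ p ^ μ ∈
        boundedForms F y d (l + (p ^ μ * (m + H.natDegree) + 1) + H.natDegree) := by
  obtain ⟨O, s, hO, hsm, hso⟩ := exists_boundedForms_order_eq hy hφ m
  obtain ⟨u, hu₀, hul, hus⟩ := exists_sum_pow_mul_eq_zero hd hyd hy (μ := μ) (p := p) hsm
    (hlm.trans_le (Nat.mul_le_mul_left l hO))
  refine ⟨O, u, s, hus, fun h ↦ ?_, Submodule.sum_mem _ fun o _ ↦
    mul_mem_boundedForms hyd (hul o) (pow_mem_boundedForms hd hyd (hsm o) _)⟩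
  have hord (o) (ho : φ (u o) ≠ 0) : (φ (u o)).order < (p ^ μ : ℕ) :=
    (order_lt_of_mem_boundedForms hd hyd hy φ (hul o) fun h ↦ ho (by simp [h])).trans_le
      (by exact_mod_cast hl)
  have hφu : (fun o ↦ φ (u o)) ≠ 0 := fun h ↦
    hu₀ (funext fun o ↦ (map_eq_zero_iff φ hφ).1 (congrFun h o))
  exact sum_mul_pow_ne_zero Subtype.val_injective hso hord hφu (by simpa using congrArg φ h)

end Auxiliary

theorem card_lt_of_forall_pow_eq_one [Fintype F] {p μ e : ℕ} [ExpChar F p]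
    (hq : Fintype.card F = p ^ μ * p ^ μ) (hde : Fintype.card F = d * e + 1)
    (hH : KummerPrimitive d H) (hH₀ : H.eval 0 = 1) {l m : ℕ}
    (hl : (d + 1) * (l + H.natDegree) ≤ p ^ μ)
    (hlm : p ^ μ * (l + H.natDegree) + 1 + m + H.natDegree < l * (d * m)) {Z : Finset F}
    (hZ : ∀ x ∈ Z, H.eval x ^ e = 1) :
    Z.card < l + (p ^ μ * (m + H.natDegree) + 1) + H.natDegree := by
  have hdF : (d : F) ≠ 0 := fun h ↦ by
    have := congrArg (Nat.cast (R := F)) hde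
    simp [h] at this
  have hd : d ≠ 0 := by
    rintro rfl
    simp at hdF
  obtain ⟨Y, hY⟩ := exists_powerSeries_pow_eq hdF (f := algebraMap F[X] _ H)
    (by rw [PowerSeries.algebraMap_apply']; simpa [coeff_zero_eq_eval_zero] using hH₀)
  have hφ := expansion_injective hd hH hY
  have : IsDomain (AdjoinRoot (X ^ d - C H)) := hφ.isDomain (expansion hY).toRingHom
  have : ExpChar (AdjoinRoot (X ^ d - C H)) p :=
    expChar_of_injective_algebraMap (FaithfulSMul.algebraMap_injective F _) p
  obtain ⟨O, u, s, hΘ, hΨ₀, hΨ⟩ := exists_stepanov_family (p := p) (μ := μ) hd (root_pow_eq d H)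
    (linearIndependent_root_pow hd H) hφ hl hlm
  refine card_lt_of_specialize_eq_zero hd hΨ₀ hΨ fun x hx ↦ ?_
  have hfrob := pow_card_eq_self_of_pow_eq_one hde (hZ x hx)
  rw [hq] at hfrob
  have hτ : specialize d H x (∑ o, u o * s o ^ p ^ μ) ^ p ^ μ = 0 := by
    calc specialize d H x (∑ o, u o * s o ^ p ^ μ) ^ p ^ μ
        = ∑ o, specialize d H x (u o ^ p ^ μ) * specialize d H x (s o) ^ (p ^ μ * p ^ μ) := by
          rw [← map_pow, sum_pow_char_pow, map_sum]
          simp only [mul_pow, map_mul, map_pow, pow_mul]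
      _ = specialize d H x (∑ o, u o ^ p ^ μ * s o) := by simp only [hfrob, map_sum, map_mul]
      _ = 0 := by rw [hΘ, map_zero]
  rw [← hfrob (specialize d H x _), pow_mul, hτ, zero_pow (pow_ne_zero _ (expChar_ne_zero F p))]

theorem exists_stepanov_parameters {w D P : ℕ} (hd : 0 < d) (hP : P = d * w + 1)
    (hD : 4 * (D + 2) ≤ w) :
    ∃ l m, (d + 1) * (l + D) ≤ P ∧ P * (l + D) + 1 + m + D < l * (d * m) ∧
      l + (P * (m + D) + 1) + D ≤ w * P + 17 * (D + 1) * P := by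
  obtain ⟨l, ρ, hwl, hρ, hl⟩ : ∃ l ρ, w = 4 * l + ρ ∧ ρ < 4 ∧ D + 2 ≤ l :=
    ⟨w / 4, w % 4, by omega, by omega, by omega⟩
  have hdeg : (d + 1) * (l + D) ≤ P := by nlinarith
  refine ⟨l, w + 16 * D + 16, hdeg, ?_, by nlinarith⟩
  have hPl : P ≤ 8 * (d * l) := by nlinarith
  have hlT : l ≤ d * l := Nat.le_mul_of_pos_left l hd
  have hDT : 2 * D ≤ d * l * D := Nat.mul_le_mul_right D (by omega)
  calc P * (l + D) + 1 + (w + 16 * D + 16) + D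
      ≤ P * l + 8 * (d * l) * D + (4 * l + 17 * D + 20) := by nlinarith
    _ < l * (d * w) + 16 * (d * l) * D + 16 * (d * l) := by
      rw [hP]
      linarith
    _ = l * (d * (w + 16 * D + 16)) := by ring

theorem mul_card_le_of_forall_pow_eq_one [Fintype F] {p μ e w : ℕ} [ExpChar F p]
    (hq : Fintype.card F = p ^ μ * p ^ μ) (hde : Fintype.card F = d * e + 1)
    (hw : p ^ μ = d * w + 1) (hH : KummerPrimitive d H) (hH₀ : H.eval 0 = 1) {Z : Finset F}
    (hZ : ∀ x ∈ Z, H.eval x ^ e = 1) :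
    d * Z.card ≤ p ^ μ * p ^ μ + 17 * d ^ 2 * (H.natDegree + 1) * p ^ μ := by
  have hd : 0 < d := by
    refine Nat.pos_of_ne_zero ?_
    rintro rfl
    exact (Fintype.one_lt_card (α := F)).ne' (by simpa using hde)
  obtain hD | hD := le_or_gt (4 * (H.natDegree + 2)) w
  · obtain ⟨l, m, hl, hlm, hbound⟩ := exists_stepanov_parameters hd hw hD
    have hcard := (card_lt_of_forall_pow_eq_one hq hde hH hH₀ hl hlm hZ).le.trans hbound
    calc d * Z.card ≤ d * (w * p ^ μ + 17 * (H.natDegree + 1) * p ^ μ) :=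
          Nat.mul_le_mul_left d hcard
      _ = d * w * p ^ μ + 17 * d * (H.natDegree + 1) * p ^ μ := by ring
      _ ≤ _ := by gcongr; exacts [by omega, Nat.le_self_pow two_ne_zero d]
  · have hP : p ^ μ ≤ 4 * d * (H.natDegree + 2) := by nlinarith
    calc d * Z.card ≤ d * (p ^ μ * p ^ μ) := Nat.mul_le_mul_left d (hq ▸ Z.card_le_univ)
      _ ≤ d * (4 * d * (H.natDegree + 2) * p ^ μ) := by gcongr
      _ = d ^ 2 * (4 * (H.natDegree + 2)) * p ^ μ := by ring
      _ ≤ d ^ 2 * (17 * (H.natDegree + 1)) * p ^ μ := by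
        exact Nat.mul_le_mul_right _ (Nat.mul_le_mul_left _ (by omega))
      _ = 17 * d ^ 2 * (H.natDegree + 1) * p ^ μ := by ring
      _ ≤ _ := Nat.le_add_left _ _

theorem KummerPrimitive.taylor (hH : KummerPrimitive d H) (a : F) :
    KummerPrimitive d (taylor a H) := by
  refine fun n hn ↦ hH n fun x ↦ ?_
  have h := hn (x - a)
  rwa [rootMultiplicity_eq_rootMultiplicity, taylor_apply, comp_assoc, add_comp, X_comp, C_comp,
    add_assoc, ← C_add, sub_add_cancel, ← rootMultiplicity_eq_rootMultiplicity] at h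

theorem KummerPrimitive.C_mul (hH : KummerPrimitive d H) {a : F} (ha : a ≠ 0) :
    KummerPrimitive d (C a * H) := by
  classical
  simpa only [KummerPrimitive, ← count_roots, roots_C_mul H ha] using hH

theorem mul_card_le_of_forall_pow_eq [Fintype F] {p μ e w : ℕ} [ExpChar F p]
    (hq : Fintype.card F = p ^ μ * p ^ μ) (hde : Fintype.card F = d * e + 1)
    (hw : p ^ μ = d * w + 1) (hH : KummerPrimitive d H) {c : F} (hc : c ≠ 0) {Z : Finset F}
    (hZ : ∀ x ∈ Z, H.eval x ^ e = c) :
    d * Z.card ≤ p ^ μ * p ^ μ + 17 * d ^ 2 * (H.natDegree + 1) * p ^ μ := by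
  obtain rfl | ⟨a, ha⟩ := Z.eq_empty_or_nonempty
  · simp
  have he : e ≠ 0 := by
    rintro rfl
    exact (Fintype.one_lt_card (α := F)).ne' (by simpa using hde)
  have hHa : H.eval a ≠ 0 := fun h ↦ hc (by rw [← hZ a ha, h, zero_pow he])
  have hbound := mul_card_le_of_forall_pow_eq_one hq hde hw
    ((hH.taylor a).C_mul (inv_ne_zero hHa)) (by simp [taylor_eval, hHa])
    (Z := Z.map (Equiv.subRight a).toEmbedding) (by
      simp only [Finset.mem_map_equiv]
      intro x hx
      simpa [taylor_eval, mul_pow, hZ a ha, hc] using congrArg (c⁻¹ * ·) (hZ _ hx))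
  rwa [Finset.card_map, natDegree_C_mul (inv_ne_zero hHa), natDegree_taylor] at hbound

end Stepanov

section CharacterSum

variable {F : Type*} [Field F] [Fintype F] {d e : ℕ} {θ : MulChar F ℂ}

theorem mulChar_apply_eq_one_of_pow_eq_one (hde : Fintype.card F = d * e + 1) (hθ : θ ^ d = 1)
    {t : Fˣ} (ht : t ^ e = 1) : θ t = 1 := by
  classical
  have hcard : Nat.card Fˣ = d * e := by
    rw [Nat.card_eq_fintype_card, Fintype.card_units, hde, Nat.add_sub_cancel]
  have hrange : (powMonoidHom d : Fˣ →* Fˣ).range = (powMonoidHom e).ker := by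
    refine Subgroup.eq_of_le_of_card_ge ?_ ?_
    · rintro _ ⟨s, rfl⟩
      rw [MonoidHom.mem_ker, powMonoidHom_apply, powMonoidHom_apply, ← pow_mul, ← hcard,
        pow_card_eq_one']
    · have hd : 0 < d := Nat.pos_of_ne_zero fun h ↦ by simp [h] at hcard
      rw [IsCyclic.card_powMonoidHom_ker, IsCyclic.card_powMonoidHom_range, hcard,
        Nat.gcd_mul_left_left, Nat.gcd_mul_right_left, Nat.mul_div_cancel_left e hd]
  obtain ⟨s, rfl⟩ : t ∈ (powMonoidHom d : Fˣ →* Fˣ).range := by rwa [hrange]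
  rw [powMonoidHom_apply, Units.val_pow_eq_pow_val, map_pow, ← MulChar.pow_apply_coe, hθ,
    MulChar.one_apply_coe]

theorem card_units_pow_eq_one (hde : Fintype.card F = d * e + 1) [DecidableEq F] :
    (Finset.univ.filter fun t : Fˣ ↦ t ^ e = 1).card = e := by
  have h := IsCyclic.card_powMonoidHom_ker (G := Fˣ) e
  rw [Nat.card_eq_fintype_card (α := Fˣ), Fintype.card_units, hde, Nat.add_sub_cancel,
    Nat.gcd_mul_left_left] at h
  rw [Nat.card_eq_fintype_card, Fintype.card_subtype] at h
  simpa [MonoidHom.mem_ker] using h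

theorem sum_mulChar_pow_eq [DecidableEq F] (hde : Fintype.card F = d * e + 1) (hθ : θ ^ d = 1)
    (z : F) : ∑ v with z ^ e = ((v : Fˣ) : F) ^ e, θ v = e * θ z := by
  obtain rfl | hz := eq_or_ne z 0
  · have he : e ≠ 0 := by
      rintro rfl
      exact (Fintype.one_lt_card (α := F)).ne' (by simpa using hde)
    rw [MulChar.map_zero, mul_zero, zero_pow he, Finset.filter_false_of_mem, Finset.sum_empty]
    exact fun v _ h ↦ pow_ne_zero e v.ne_zero h.symm
  lift z to Fˣ using hz.isUnit
  calc ∑ v with (z : F) ^ e = ((v : Fˣ) : F) ^ e, θ v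
      = ∑ t with t ^ e = 1, θ (z * t : Fˣ) := by
        refine Finset.sum_nbij' (z⁻¹ * ·) (z * ·) ?_ ?_ ?_ ?_ ?_ <;>
          simp [mul_pow, ← Units.val_pow_eq_pow_val, inv_mul_eq_one, Units.val_inj]
    _ = ∑ t with (t : Fˣ) ^ e = 1, θ z := by
      refine Finset.sum_congr rfl fun t ht ↦ ?_
      rw [Units.val_mul, map_mul,
        mulChar_apply_eq_one_of_pow_eq_one hde hθ (Finset.mem_filter.1 ht).2, mul_one]
    _ = e * θ z := by
      rw [Finset.sum_const, card_units_pow_eq_one hde, nsmul_eq_mul]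

theorem norm_sum_mul_le_sum_sub {ι : Type*} [Fintype ι] {f : ι → ℂ} {w : ι → ℝ} {B : ℝ}
    (hf : ∑ i, f i = 0) (hf₁ : ∀ i, ‖f i‖ ≤ 1) (hw : ∀ i, w i ≤ B) :
    ‖∑ i, f i * w i‖ ≤ ∑ i, (B - w i) := by
  calc ‖∑ i, f i * w i‖ = ‖∑ i, f i * ((B - w i : ℝ) : ℂ)‖ := by
        rw [← norm_neg]
        simp [mul_sub, Finset.sum_sub_distrib, ← Finset.sum_mul, hf]
    _ ≤ ∑ i, ‖f i * ((B - w i : ℝ) : ℂ)‖ := norm_sum_le _ _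
    _ ≤ ∑ i, (B - w i) := Finset.sum_le_sum fun i _ ↦ by
      have h := sub_nonneg.2 (hw i)
      rw [norm_mul, Complex.norm_of_nonneg h]
      exact mul_le_of_le_one_left h (hf₁ i)

theorem sum_mul_card_pow_eq [DecidableEq F] (hde : Fintype.card F = d * e + 1) (hθ : θ ^ d = 1)
    (f : F → F) :
    ∑ v : Fˣ, θ v * (Finset.univ.filter fun x ↦ f x ^ e = (v : F) ^ e).card =
      e * ∑ x, θ (f x) := by
  calc ∑ v : Fˣ, θ v * (Finset.univ.filter fun x ↦ f x ^ e = (v : F) ^ e).card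
      = ∑ v : Fˣ, ∑ x, if f x ^ e = (v : F) ^ e then θ v else 0 := by
        simp [← Finset.sum_filter, mul_comm]
    _ = ∑ x, e * θ (f x) := by
      rw [Finset.sum_comm]
      simp_rw [← sum_mulChar_pow_eq hde hθ, Finset.sum_filter]
    _ = e * ∑ x, θ (f x) := (Finset.mul_sum ..).symm

theorem sum_card_pow_eq [DecidableEq F] (hde : Fintype.card F = d * e + 1) (f : F → F) :
    ∑ v : Fˣ, (Finset.univ.filter fun x ↦ f x ^ e = (v : F) ^ e).card =
      e * (Finset.univ.filter fun x ↦ f x ≠ 0).card := by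
  have h := sum_mul_card_pow_eq hde (one_pow d : (1 : MulChar F ℂ) ^ d = 1) f
  have hone (x : F) : (1 : MulChar F ℂ) x = if x ≠ 0 then 1 else 0 := by
    split_ifs with hx
    · exact MulChar.one_apply hx.isUnit
    · exact MulChar.map_nonunit _ (by simpa using hx)
  simp only [hone, Finset.sum_boole, Units.ne_zero, ne_eq, not_false_eq_true, if_true, one_mul] at h
  exact_mod_cast h

theorem card_le_card_eval_ne_zero_add_natDegree [DecidableEq F] {H : F[X]} (hH : H ≠ 0) :
    Fintype.card F ≤ (Finset.univ.filter fun x ↦ H.eval x ≠ 0).card + H.natDegree := by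
  rw [← Finset.card_univ, ← Finset.card_filter_add_card_filter_not fun x ↦ H.eval x ≠ 0]
  refine Nat.add_le_add_left (card_le_degree_of_subset_roots fun x hx ↦ ?_) _
  rw [mem_roots hH]
  simpa using hx

theorem norm_mulChar_apply_unit {R : Type*} [CommRing R] [Finite Rˣ] (χ : MulChar R ℂ) (u : Rˣ) :
    ‖χ u‖ = 1 := by
  cases nonempty_fintype Rˣ
  exact Complex.norm_eq_one_of_mem_rootsOfUnity (MulChar.apply_mem_rootsOfUnity u)

theorem sum_units_mulChar_eq_zero {R : Type*} [CommMonoid R] [Fintype Rˣ] {χ : MulChar R ℂ}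
    (hχ : χ ≠ 1) : ∑ v : Rˣ, χ v = 0 :=
  sum_hom_units_eq_zero ((Units.coeHom ℂ).comp χ.toUnitHom) fun h ↦
    hχ (MulChar.ext fun v ↦ by simpa using DFunLike.congr_fun h v)

theorem norm_sum_mulChar_eval_le {p μ w : ℕ} [ExpChar F p] {H : F[X]}
    (hq : Fintype.card F = p ^ μ * p ^ μ) (hde : Fintype.card F = d * e + 1)
    (hw : p ^ μ = d * w + 1) (hH : KummerPrimitive d H) (hH₀ : H ≠ 0) (hθ : θ ^ d = 1)
    (hθ₁ : θ ≠ 1) :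
    ‖∑ x, θ (H.eval x)‖ ≤ 17 * d ^ 2 * (H.natDegree + 1) * p ^ μ + H.natDegree := by
  classical
  set N : Fˣ → ℕ := fun v ↦ (Finset.univ.filter fun x ↦ H.eval x ^ e = (v : F) ^ e).card
  set E : ℝ := 17 * d ^ 2 * (H.natDegree + 1) * p ^ μ with hE
  set S := ∑ x, θ (H.eval x)
  have hN (v) : (d * N v : ℝ) ≤ Fintype.card F + E := by
    rw [hq, hE]
    exact_mod_cast mul_card_le_of_forall_pow_eq hq hde hw hH (pow_ne_zero e v.ne_zero)
      (Z := Finset.univ.filter fun x ↦ H.eval x ^ e = (v : F) ^ e) (by simp)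
  have hsum : ∑ v : Fˣ, θ v * ((d * N v : ℝ) : ℂ) = (d * e : ℕ) * S := by
    push_cast
    rw [mul_assoc, ← sum_mul_card_pow_eq hde hθ fun x ↦ H.eval x, Finset.mul_sum]
    exact Finset.sum_congr rfl fun v _ ↦ mul_left_comm ..
  have hmean : ∑ v : Fˣ, (d * N v : ℝ) =
      (d * e : ℕ) * (Finset.univ.filter fun x ↦ H.eval x ≠ 0).card := by
    rw [← Finset.mul_sum, Nat.cast_mul, mul_assoc]
    exact_mod_cast congrArg (d * ·) (sum_card_pow_eq hde fun x ↦ H.eval x)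
  have hroots : (Fintype.card F : ℝ) ≤
      (Finset.univ.filter fun x ↦ H.eval x ≠ 0).card + H.natDegree :=
    mod_cast card_le_card_eval_ne_zero_add_natDegree hH₀
  have hcard : Fintype.card Fˣ = d * e := by rw [Fintype.card_units, hde, Nat.add_sub_cancel]
  have hcard₀ : (0 : ℝ) < (d * e : ℕ) := by rw [← hcard]; exact_mod_cast Fintype.card_pos
  have hbound := norm_sum_mul_le_sum_sub (sum_units_mulChar_eq_zero hθ₁)
    (fun v ↦ (norm_mulChar_apply_unit θ v).le) hN
  rw [hsum, Finset.sum_sub_distrib, hmean, norm_mul, Complex.norm_natCast, Finset.sum_const,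
    Finset.card_univ, hcard, nsmul_eq_mul, ← mul_sub] at hbound
  linarith [le_of_mul_le_mul_left hbound hcard₀]

end CharacterSum

section PowerSums

open Filter Topology Finset.HasAntidiagonal

theorem frequently_half_norm_pow_le_re {ι : Type*} [Finite ι] (β : ι → ℂ) :
    ∃ᶠ n in atTop, ∀ i, ‖β i‖ ^ n / 2 ≤ (β i ^ n).re := by
  let u (i) : Circle := Circle.exp (β i).arg
  have hu (i) : β i = ‖β i‖ * (u i : ℂ) := by rw [Circle.coe_exp, Complex.norm_mul_exp_arg_mul_I]
  have hnhds : ∀ᶠ w in 𝓝 (1 : ι → Circle), ∀ i, 1 / 2 < (w i : ℂ).re := by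
    refine eventually_all.2 fun i ↦ ContinuousAt.eventually_lt continuousAt_const
      (Continuous.continuousAt ?_) (by norm_num)
    fun_prop
  refine ((mapClusterPt_one_atTop_pow u).frequently hnhds).mono fun n hn i ↦ ?_
  have hre : (β i ^ n).re = ‖β i‖ ^ n * ((u i ^ n : Circle) : ℂ).re := by
    rw [hu i, mul_pow, Circle.coe_pow, ← Complex.ofReal_pow, Complex.re_ofReal_mul, ← hu i]
  rw [hre, div_eq_mul_one_div]
  exact mul_le_mul_of_nonneg_left (hn i).le (by positivity)

theorem norm_le_of_norm_sum_pow_le {ι : Type*} [Fintype ι] {β : ι → ℂ} {R C : ℝ} (hR : 0 < R)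
    (h : ∀ n ≠ 0, ‖∑ i, β i ^ n‖ ≤ C * R ^ n) (i : ι) : ‖β i‖ ≤ R := by
  by_contra! hi
  have hlim : Tendsto (fun n ↦ C * (R / ‖β i‖) ^ n) atTop (𝓝 (C * 0)) :=
    (tendsto_pow_atTop_nhds_zero_of_lt_one (by positivity)
      ((div_lt_one (hR.trans hi)).2 hi)).const_mul C
  rw [mul_zero] at hlim
  obtain ⟨n, hre, hsmall, hn⟩ := ((frequently_half_norm_pow_le_re β).and_eventually
    ((hlim.eventually (gt_mem_nhds one_half_pos)).and (eventually_ne_atTop 0))).exists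
  have hlarge : ‖β i‖ ^ n / 2 ≤ C * R ^ n := by
    calc ‖β i‖ ^ n / 2 ≤ (β i ^ n).re := hre i
      _ ≤ ∑ j, (β j ^ n).re := Finset.single_le_sum (f := fun j ↦ (β j ^ n).re)
        (fun j _ ↦ le_trans (by positivity) (hre j)) (Finset.mem_univ i)
      _ ≤ ‖∑ j, β j ^ n‖ := by
        rw [← Complex.re_sum]
        exact Complex.re_le_norm _
      _ ≤ C * R ^ n := h n hn
  rw [div_pow, mul_div_assoc', div_lt_iff₀ (pow_pos (hR.trans hi) n)] at hsmall
  linarith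

variable {k : Type*} [Field k] {m : ℕ} {c : ℕ → k}

theorem exists_aeval_esymm_eq [IsAlgClosed k] (hc₀ : c 0 = 1) (hc : ∀ n, m < n → c n = 0) :
    ∃ α : Fin m → k,
      ∀ n, MvPolynomial.aeval α (MvPolynomial.esymm (Fin m) k n) = (-1) ^ n * c n := by
  let Q : k[X] := ∑ i ∈ Finset.range (m + 1), C (c (m - i)) * X ^ i
  have hQ (i) (hi : i ≤ m) : Q.coeff i = c (m - i) := by
    simp only [Q, finsetSum_coeff, coeff_C_mul_X_pow]
    rw [Finset.sum_ite_eq, if_pos (Finset.mem_range.2 (by omega))]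
  have hQdeg : Q.natDegree = m := by
    refine natDegree_eq_of_le_of_coeff_ne_zero ?_ (by simp [hQ m le_rfl, hc₀])
    exact natDegree_sum_le_of_forall_le _ _ fun i hi ↦ (natDegree_C_mul_X_pow_le _ _).trans
      (Nat.lt_succ_iff.1 (Finset.mem_range.1 hi))
  have hQmonic : Q.Monic := by rw [Monic, leadingCoeff, hQdeg, hQ m le_rfl, Nat.sub_self, hc₀]
  have hcard : Q.roots.card = m := by rw [← (IsAlgClosed.splits Q).natDegree_eq_card_roots, hQdeg]
  obtain ⟨α, hα⟩ : ∃ α : Fin m → k, Finset.univ.val.map α = Q.roots := by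
    have hl : Q.roots.toList.length = m := by simpa using hcard
    refine ⟨fun i ↦ Q.roots.toList.get (i.cast hl.symm), ?_⟩
    rw [Fin.univ_val_map]
    conv_rhs => rw [← Multiset.coe_toList Q.roots]
    congr 1
    apply List.ext_get <;> simp [hcard]
  refine ⟨α, fun n ↦ ?_⟩
  rw [MvPolynomial.aeval_esymm_eq_multiset_esymm, hα]
  obtain hn | hn := le_or_gt n m
  · have h := coeff_eq_esymm_roots_of_card (p := Q) (by rw [hcard, hQdeg]) (k := m - n) (by omega)
    rw [hQ _ (by omega), hQdeg, hQmonic.leadingCoeff, Nat.sub_sub_self hn, one_mul] at h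
    rw [h, ← mul_assoc, ← mul_pow, neg_one_mul, neg_neg, one_pow, one_mul]
  · rw [hc n hn, mul_zero, Multiset.esymm, Multiset.powersetCard_eq_empty _ (by omega)]
    simp

theorem natCast_mul_eq_sum_of_aeval_esymm_eq {σ : Type*} [Fintype σ] {α : σ → k}
    (hα : ∀ n, MvPolynomial.aeval α (MvPolynomial.esymm σ k n) = (-1) ^ n * c n) (n : ℕ) :
    n * c n = ∑ a ∈ antidiagonal n with a.1 < n, c a.1 * -∑ i, α i ^ a.2 := by
  classical
  have hsign (j : ℕ) : (-1 : k) ^ j * (-1) ^ j = 1 := by rw [← mul_pow]; simp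
  have hnewton := congrArg (fun z ↦ (-1) ^ n * MvPolynomial.aeval α z)
    (MvPolynomial.mul_esymm_eq_sum σ k n)
  simp only [map_mul, map_natCast, hα, map_sum, map_pow, map_neg, map_one,
    MvPolynomial.psum, MvPolynomial.aeval_X] at hnewton
  calc n * c n = (-1) ^ n * (n * ((-1) ^ n * c n)) := by
        linear_combination -(n * c n) * hsign n
    _ = _ := hnewton
    _ = _ := by
      rw [pow_succ, ← mul_assoc, ← mul_assoc, hsign, one_mul, Finset.mul_sum]
      refine Finset.sum_congr rfl fun a _ ↦ ?_
      rw [← mul_assoc ((-1) ^ a.1), hsign]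
      ring

theorem eq_of_sum_antidiagonal_eq {R : Type*} [CommRing R] {c s t : ℕ → R} (hc : c 0 = 1)
    (h : ∀ n, ∑ a ∈ antidiagonal n with a.1 < n, c a.1 * s a.2 =
      ∑ a ∈ antidiagonal n with a.1 < n, c a.1 * t a.2) {n : ℕ} (hn : n ≠ 0) :
    s n = t n := by
  induction n using Nat.strong_induction_on with
  | _ n ih =>
    have hn₀ : (0, n) ∈ (antidiagonal n).filter fun a ↦ a.1 < n := by
      simpa using Nat.pos_of_ne_zero hn
    have hrest : ∀ a ∈ ((antidiagonal n).filter fun a ↦ a.1 < n).erase (0, n),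
        c a.1 * s a.2 = c a.1 * t a.2 := by
      rintro ⟨i, j⟩ ha
      simp only [Finset.mem_erase, Finset.mem_filter, mem_antidiagonal, ne_eq,
        Prod.mk.injEq] at ha
      rw [ih j (by omega) (by omega)]
    have hsum := h n
    rw [← Finset.add_sum_erase _ _ hn₀, ← Finset.add_sum_erase _ _ hn₀,
      Finset.sum_congr rfl hrest] at hsum
    simpa [hc] using hsum

theorem exists_eq_neg_sum_pow_of_newton [IsAlgClosed k] {s : ℕ → k} (hc₀ : c 0 = 1)
    (hc : ∀ n, m < n → c n = 0)
    (hs : ∀ n : ℕ, n * c n = ∑ a ∈ antidiagonal n with a.1 < n, c a.1 * s a.2) :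
    ∃ α : Fin m → k, ∀ n ≠ 0, s n = -∑ i, α i ^ n := by
  obtain ⟨α, hα⟩ := exists_aeval_esymm_eq hc₀ hc
  exact ⟨α, fun n hn ↦ eq_of_sum_antidiagonal_eq hc₀ (t := fun n ↦ -∑ i, α i ^ n)
    (fun n ↦ (hs n).symm.trans (natCast_mul_eq_sum_of_aeval_esymm_eq hα n)) hn⟩

end PowerSums

section VonMangoldt

open Finset.HasAntidiagonal UniqueFactorizationMonoid

variable {K : Type*} [Field K]

theorem eq_of_monic_of_pow_eq_pow {π ρ : K[X]} {a b : ℕ} (hπ : Irreducible π) (hπ₁ : π.Monic)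
    (hρ : Irreducible ρ) (hρ₁ : ρ.Monic) (ha : a ≠ 0) (h : π ^ a = ρ ^ b) : π = ρ :=
  eq_of_monic_of_associated hπ₁ hρ₁ <| hπ.associated_of_dvd hρ <|
    hπ.prime.dvd_of_dvd_pow (h ▸ dvd_pow_self π ha)

theorem exists_monic_irreducible_pow_eq {g : K[X]} (hg : g.Monic) (h : IsPrimePow g) :
    ∃ π a, Irreducible π ∧ π.Monic ∧ a ≠ 0 ∧ π ^ a = g := by
  classical
  obtain ⟨π, a, hπ, ha, rfl⟩ := h
  refine ⟨normalize π, a, (normalize_associated π).symm.irreducible hπ.irreducible,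
    monic_normalize hπ.ne_zero, ha.ne', ?_⟩
  exact eq_of_monic_of_associated ((monic_normalize hπ.ne_zero).pow a) hg
    (normalize_associated π).pow_pow

open Classical in
/-- The von Mangoldt function of the polynomial ring `K[X]`: the degree of `π` at a power of an
irreducible polynomial `π`, and `0` at all other polynomials. -/
noncomputable def vonMangoldt (g : K[X]) : ℕ :=
  if h : IsPrimePow g then h.choose.natDegree else 0

theorem vonMangoldt_pow {π : K[X]} (hπ : Irreducible π) {a : ℕ} (ha : a ≠ 0) :
    vonMangoldt (π ^ a) = π.natDegree := by
  have h : IsPrimePow (π ^ a) := ⟨π, a, hπ.prime, Nat.pos_of_ne_zero ha, rfl⟩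
  obtain ⟨b, hρ, hb, heq⟩ := h.choose_spec
  have hdvd : h.choose ∣ π := hρ.dvd_of_dvd_pow (heq ▸ dvd_pow_self _ hb.ne')
  rw [vonMangoldt, dif_pos h]
  exact natDegree_eq_of_degree_eq
    (degree_eq_degree_of_associated (hρ.irreducible.associated_of_dvd hπ hdvd))

open Classical in
theorem irreducible_and_monic_of_mem_normalizedFactors {g π : K[X]} (hπ : π ∈ normalizedFactors g) :
    Irreducible π ∧ π.Monic :=
  have hirr := irreducible_of_normalized_factor π hπ
  ⟨hirr, normalize_normalized_factor π hπ ▸ monic_normalize hirr.ne_zero⟩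

open Classical in
theorem sum_count_normalizedFactors_mul_natDegree {g : K[X]} (hg : g.Monic) :
    ∑ π ∈ (normalizedFactors g).toFinset, (normalizedFactors g).count π * π.natDegree =
      g.natDegree := by
  have hmonic (π) (hπ : π ∈ normalizedFactors g) : π.Monic :=
    (irreducible_and_monic_of_mem_normalizedFactors hπ).2
  have hprod : (normalizedFactors g).prod = g :=
    eq_of_monic_of_associated (by simpa using monic_multiset_prod_of_monic _ id hmonic) hg
      (prod_normalizedFactors hg.ne_zero)
  conv_rhs => rw [← hprod, natDegree_multiset_prod_of_monic _ hmonic]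
  simp only [Finset.sum_multiset_map_count, smul_eq_mul]

open Classical in
theorem pow_dvd_iff_le_count_normalizedFactors {g π : K[X]} (hg : g ≠ 0) (hπ : Irreducible π)
    (hπ₁ : π.Monic) (a : ℕ) : π ^ a ∣ g ↔ a ≤ (normalizedFactors g).count π := by
  rw [pow_dvd_iff_le_emultiplicity, emultiplicity_eq_count_normalizedFactors hπ hg,
    hπ₁.normalize_eq_self, Nat.cast_le]

theorem sum_vonMangoldt_of_monic_dvd {g : K[X]} (hg : g.Monic) {s : Finset K[X]}
    (hs : ∀ f, f ∈ s ↔ f.Monic ∧ f ∣ g) : ∑ f ∈ s, vonMangoldt f = g.natDegree := by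
  classical
  set N := normalizedFactors g
  let powers : Finset (Σ _ : K[X], ℕ) := N.toFinset.sigma fun π ↦ Finset.Icc 1 (N.count π)
  have mem_powers (z) : z ∈ powers ↔ z.1 ∈ N ∧ 1 ≤ z.2 ∧ z.2 ≤ N.count z.1 := by
    simp only [powers, Finset.mem_sigma, Multiset.mem_toFinset, Finset.mem_Icc]
  have hirr {z} (hz : z ∈ powers) : Irreducible z.1 ∧ z.1.Monic :=
    irreducible_and_monic_of_mem_normalizedFactors ((mem_powers z).1 hz).1
  calc ∑ f ∈ s, vonMangoldt f
      = ∑ z ∈ powers, z.1.natDegree := by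
        refine (Finset.sum_of_injOn (fun z ↦ z.1 ^ z.2) ?_ ?_ ?_ ?_).symm
        · rintro ⟨π, a⟩ hπ ⟨ρ, b⟩ hρ (hab : π ^ a = ρ ^ b)
          have ha : a ≠ 0 := Nat.one_le_iff_ne_zero.1 ((mem_powers _).1 hπ).2.1
          obtain rfl : π = ρ := eq_of_monic_of_pow_eq_pow (hirr hπ).1 (hirr hπ).2 (hirr hρ).1
            (hirr hρ).2 ha hab
          obtain rfl : a = b := by
            simpa [natDegree_pow, (hirr hπ).1.natDegree_pos.ne'] using congrArg natDegree hab
          rfl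
        · exact fun z hz ↦ (hs _).2 ⟨(hirr hz).2.pow _,
            (pow_dvd_iff_le_count_normalizedFactors hg.ne_zero (hirr hz).1 (hirr hz).2 _).2
              ((mem_powers z).1 hz).2.2⟩
        · intro f hf hf'
          obtain ⟨hf₁, hfg⟩ := (hs f).1 hf
          by_contra hf₀
          obtain ⟨π, a, hπ, hπ₁, ha, rfl⟩ := exists_monic_irreducible_pow_eq hf₁
            (by_contra fun h ↦ hf₀ (dif_neg h))
          have hle := (pow_dvd_iff_le_count_normalizedFactors hg.ne_zero hπ hπ₁ a).1 hfg
          exact hf' ⟨⟨π, a⟩, (mem_powers _).2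
            ⟨Multiset.count_pos.1 ((Nat.pos_of_ne_zero ha).trans_le hle),
              Nat.one_le_iff_ne_zero.2 ha, hle⟩, rfl⟩
        · exact fun z hz ↦ (vonMangoldt_pow (hirr hz).1
            (Nat.one_le_iff_ne_zero.1 ((mem_powers z).1 hz).2.1)).symm
    _ = g.natDegree := by
        rw [← sum_count_normalizedFactors_mul_natDegree hg, Finset.sum_sigma]
        simp only [Finset.sum_const, Nat.card_Icc, Nat.add_sub_cancel, smul_eq_mul]
        rfl

theorem vonMangoldt_one : vonMangoldt (1 : K[X]) = 0 := dif_neg not_isPrimePow_one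

variable [Finite K]

theorem finite_setOf_monic_natDegree_eq (K : Type*) [Field K] [Finite K] (n : ℕ) :
    {g : K[X] | g.Monic ∧ g.natDegree = n}.Finite := by
  refine .of_injOn (f := fun g (i : Fin (n + 1)) ↦ g.coeff i) (Set.mapsTo_univ _ _) ?_
    Set.finite_univ
  rintro g ⟨-, hg⟩ h ⟨-, hh⟩ hgh
  ext i
  obtain hi | hi := lt_or_ge i (n + 1)
  · exact congrFun hgh ⟨i, hi⟩
  · rw [coeff_eq_zero_of_natDegree_lt (by omega), coeff_eq_zero_of_natDegree_lt (by omega)]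

/-- The finite set of monic polynomials of degree `n` over a finite field. -/
noncomputable def monicsOfDegree (K : Type*) [Field K] [Finite K] (n : ℕ) : Finset K[X] :=
  (finite_setOf_monic_natDegree_eq K n).toFinset

theorem mem_monicsOfDegree {n : ℕ} {g : K[X]} :
    g ∈ monicsOfDegree K n ↔ g.Monic ∧ g.natDegree = n := by
  simp [monicsOfDegree]

theorem monicsOfDegree_zero : monicsOfDegree K 0 = {1} := by
  ext g
  rw [mem_monicsOfDegree, Finset.mem_singleton]
  exact ⟨fun h ↦ h.1.natDegree_eq_zero.1 h.2, by rintro rfl; simp⟩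

/-- The pairs of monic polynomials whose product has degree `n`, indexed by their degrees. -/
noncomputable def monicPairs (K : Type*) [Field K] [Finite K] (n : ℕ) :
    Finset (Σ _ : ℕ × ℕ, K[X] × K[X]) :=
  (antidiagonal n).sigma fun a ↦ monicsOfDegree K a.1 ×ˢ monicsOfDegree K a.2

theorem mem_monicPairs {n : ℕ} {z : Σ _ : ℕ × ℕ, K[X] × K[X]} :
    z ∈ monicPairs K n ↔ z.1.1 + z.1.2 = n ∧ (z.2.1.Monic ∧ z.2.1.natDegree = z.1.1) ∧
      z.2.2.Monic ∧ z.2.2.natDegree = z.1.2 := by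
  simp [monicPairs, mem_monicsOfDegree]

theorem mul_mem_monicsOfDegree {n : ℕ} {z : Σ _ : ℕ × ℕ, K[X] × K[X]} (hz : z ∈ monicPairs K n) :
    z.2.1 * z.2.2 ∈ monicsOfDegree K n := by
  obtain ⟨hn, ⟨h₁, hd₁⟩, h₂, hd₂⟩ := mem_monicPairs.1 hz
  exact mem_monicsOfDegree.2 ⟨h₁.mul h₂, by rw [h₁.natDegree_mul h₂, hd₁, hd₂, hn]⟩

open Classical in
theorem sum_vonMangoldt_monicPairs {n : ℕ} {g : K[X]} (hg : g ∈ monicsOfDegree K n) :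
    ∑ z ∈ monicPairs K n with z.2.1 * z.2.2 = g, vonMangoldt z.2.2 = n := by
  obtain ⟨hg₁, hgn⟩ := mem_monicsOfDegree.1 hg
  rw [← Finset.sum_image (g := fun z : Σ _ : ℕ × ℕ, K[X] × K[X] ↦ z.2.2)]
  · refine (sum_vonMangoldt_of_monic_dvd hg₁ fun f ↦ ?_).trans hgn
    simp only [Finset.mem_image, Finset.mem_filter, mem_monicPairs]
    constructor
    · rintro ⟨z, ⟨⟨-, -, hz, -⟩, rfl⟩, rfl⟩
      exact ⟨hz, dvd_mul_left _ _⟩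
    · rintro ⟨hf, h, rfl⟩
      have hh : h.Monic := hf.of_mul_monic_left hg₁
      refine ⟨⟨(h.natDegree, f.natDegree), (h, f)⟩,
        ⟨⟨?_, ⟨hh, rfl⟩, hf, rfl⟩, mul_comm _ _⟩, rfl⟩
      rw [← hgn, hf.natDegree_mul hh, add_comm]
  · rintro ⟨⟨i, j⟩, h, f⟩ hz ⟨⟨i', j'⟩, h', f'⟩ hz' (rfl : f = f')
    simp only [Finset.coe_filter, Set.mem_ofPred_eq, mem_monicPairs] at hz hz'
    obtain rfl : h = h' := mul_right_cancel₀ hz.1.2.2.1.ne_zero (hz.2.trans hz'.2.symm)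
    obtain ⟨⟨-, ⟨-, rfl⟩, -, rfl⟩, -⟩ := hz
    obtain ⟨⟨-, ⟨-, rfl⟩, -, rfl⟩, -⟩ := hz'
    rfl

-- The coefficientwise form of the identity `u L'(u) = L(u) · ∑ Λ(f) χ(f) u ^ deg f` for the
-- generating function `L(u) = ∑ χ(g) u ^ deg g`.
theorem natCast_mul_sum_monicsOfDegree {R : Type*} [CommSemiring R] (χ : K[X] →* R) (n : ℕ) :
    n * ∑ g ∈ monicsOfDegree K n, χ g =
      ∑ a ∈ antidiagonal n, (∑ h ∈ monicsOfDegree K a.1, χ h) *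
        ∑ f ∈ monicsOfDegree K a.2, vonMangoldt f * χ f := by
  classical
  calc n * ∑ g ∈ monicsOfDegree K n, χ g
      = ∑ g ∈ monicsOfDegree K n, ∑ z ∈ monicPairs K n with z.2.1 * z.2.2 = g,
          χ z.2.1 * (vonMangoldt z.2.2 * χ z.2.2) := by
        rw [Finset.mul_sum]
        refine Finset.sum_congr rfl fun g hg ↦ ?_
        conv_lhs => rw [← sum_vonMangoldt_monicPairs hg, Nat.cast_sum, Finset.sum_mul]
        refine Finset.sum_congr rfl fun z hz ↦ ?_
        rw [← (Finset.mem_filter.1 hz).2, map_mul]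
        ring
    _ = ∑ z ∈ monicPairs K n, χ z.2.1 * (vonMangoldt z.2.2 * χ z.2.2) :=
        Finset.sum_fiberwise_of_maps_to (fun _ ↦ mul_mem_monicsOfDegree) _
    _ = _ := by
        rw [monicPairs, Finset.sum_sigma]
        refine Finset.sum_congr rfl fun a _ ↦ ?_
        rw [Finset.sum_mul_sum, ← Finset.sum_product']

end VonMangoldt

section LFunction

open Finset.HasAntidiagonal IntermediateField
open scoped Finset

variable {K F ι : Type*} [Field K] [Field F] [Algebra K F]

theorem norm_algebraMap_sub_gen {R S : Type*} [CommRing R] [Ring S] [Algebra R S]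
    (h : PowerBasis R S) (a : R) :
    Algebra.norm R (algebraMap R S a - h.gen) = (minpoly R h.gen).eval a := by
  rw [← charpoly_leftMulMatrix, Matrix.eval_charpoly, Algebra.norm_eq_matrix_det h.basis, map_sub,
    AlgHom.commutes, Matrix.algebraMap_eq_diagonal, Matrix.scalar_apply]
  rfl

variable [FiniteDimensional K F]

theorem norm_algebraMap_sub (a : K) (x : F) :
    Algebra.norm K (algebraMap K F a - x) = (minpoly K x ^ Module.finrank K⟮x⟯ F).eval a := by
  have hx : IsIntegral K x := Algebra.IsIntegral.isIntegral x
  have hgen := norm_algebraMap_sub_gen (adjoin.powerBasis hx) a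
  rw [adjoin.powerBasis_gen, minpoly_gen] at hgen
  rw [eval_pow, ← hgen, ← map_pow, ← Algebra.norm_algebraMap, Algebra.norm_norm,
    (algebraMap K⟮x⟯ F).map_sub]
  rfl

theorem card_filter_minpoly_eq [Finite K] [Fintype F] [DecidableEq K[X]] {π : K[X]}
    (hπ : Irreducible π) (hπ₁ : π.Monic) (hdvd : π.natDegree ∣ Module.finrank K F) :
    #{x : F | minpoly K x = π} = π.natDegree := by
  classical
  have hdvd' : π ∣ X ^ Nat.card F - X := by
    rw [Module.natCard_eq_pow_finrank (K := K) (V := F)]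
    exact hπ.natDegree_dvd_iff_dvd_X_pow_card_pow_sub_X.1 hdvd
  have hsplits : (π.map (algebraMap K F)).Splits :=
    .of_dvd (splits_X_pow_nat_card_sub_X (K := F))
      (FiniteField.X_pow_card_sub_X_ne_zero F Finite.one_lt_card)
      (by simpa using Polynomial.map_dvd (algebraMap K F) hdvd')
  rw [← card_rootSet_eq_natDegree (PerfectField.separable_of_irreducible hπ) hsplits,
    ← Set.toFinset_card]
  congr 1
  ext x
  rw [Finset.mem_filter_univ, Set.mem_toFinset, mem_rootSet]
  constructor
  · rintro rfl
    exact ⟨hπ₁.ne_zero, minpoly.aeval _ _⟩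
  · exact fun h ↦ (minpoly.eq_of_irreducible_of_monic hπ h.2 hπ₁).symm

theorem minpoly_pow_mem_monicsOfDegree [Finite K] (x : F) :
    minpoly K x ^ Module.finrank K⟮x⟯ F ∈ monicsOfDegree K (Module.finrank K F) := by
  have hx : IsIntegral K x := Algebra.IsIntegral.isIntegral x
  refine mem_monicsOfDegree.2 ⟨(minpoly.monic hx).pow _, ?_⟩
  rw [natDegree_pow, mul_comm, ← adjoin.finrank hx, Module.finrank_mul_finrank]

theorem card_filter_minpoly_pow_eq [Finite K] [Fintype F] [DecidableEq K[X]] {g : K[X]}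
    (hg : g ∈ monicsOfDegree K (Module.finrank K F)) :
    #{x : F | minpoly K x ^ Module.finrank K⟮x⟯ F = g} = vonMangoldt g := by
  obtain ⟨hg₁, hgn⟩ := mem_monicsOfDegree.1 hg
  have hirr (x : F) : Irreducible (minpoly K x) ∧ (minpoly K x).Monic :=
    ⟨minpoly.irreducible (Algebra.IsIntegral.isIntegral x),
      minpoly.monic (Algebra.IsIntegral.isIntegral x)⟩
  by_cases h : IsPrimePow g
  · obtain ⟨π, a, hπ, hπ₁, ha, rfl⟩ := exists_monic_irreducible_pow_eq hg₁ h
    rw [natDegree_pow] at hgn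
    rw [vonMangoldt_pow hπ ha, ← card_filter_minpoly_eq hπ hπ₁ (Dvd.intro_left a hgn)]
    congr 1
    ext x
    rw [Finset.mem_filter_univ, Finset.mem_filter_univ]
    constructor
    · exact fun hx ↦ (eq_of_monic_of_pow_eq_pow hπ hπ₁ (hirr x).1 (hirr x).2 ha hx.symm).symm
    · rintro rfl
      have hdeg := (mem_monicsOfDegree.1 (minpoly_pow_mem_monicsOfDegree (K := K) x)).2
      rw [natDegree_pow, ← hgn] at hdeg
      rw [Nat.eq_of_mul_eq_mul_right hπ.natDegree_pos hdeg]
  · rw [vonMangoldt, dif_neg h, Finset.card_eq_zero, Finset.filter_eq_empty_iff]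
    exact fun x _ hx ↦ h ⟨_, _, (hirr x).1.prime, Module.finrank_pos, hx⟩

variable [Fintype ι] {χ : ι → MulChar K ℂ} {a : ι → K}

/-- The completely multiplicative function `g ↦ ∏ i, χ i (g (a i))` on polynomials attached to
multiplicative characters `χ i` and points `a i`. -/
noncomputable def evalChar (χ : ι → MulChar K ℂ) (a : ι → K) : K[X] →* ℂ :=
  ∏ i, (χ i).toMonoidHom.comp (evalRingHom (a i))

theorem evalChar_apply (g : K[X]) : evalChar χ a g = ∏ i, χ i (g.eval (a i)) := by
  rw [evalChar, MonoidHom.finsetProd_apply]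
  rfl

theorem sum_prod_mulChar_norm [Finite K] [Fintype F] :
    ∑ x : F, ∏ i, χ i (Algebra.norm K (algebraMap K F (a i) - x)) =
      ∑ g ∈ monicsOfDegree K (Module.finrank K F), vonMangoldt g * evalChar χ a g := by
  classical
  simp only [norm_algebraMap_sub, ← evalChar_apply]
  rw [← Finset.sum_fiberwise_of_maps_to (g := fun x : F ↦ minpoly K x ^ Module.finrank K⟮x⟯ F)
    fun x _ ↦ minpoly_pow_mem_monicsOfDegree x]
  refine Finset.sum_congr rfl fun g hg ↦ ?_
  rw [Finset.sum_congr rfl fun x hx ↦ congrArg (evalChar χ a) (Finset.mem_filter.1 hx).2,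
    Finset.sum_const, card_filter_minpoly_pow_eq hg, nsmul_eq_mul]

theorem add_mem_monicsOfDegree [Finite K] {n : ℕ} {f g : K[X]} (hg : g ∈ monicsOfDegree K n)
    (hf : f.degree < n) : g + f ∈ monicsOfDegree K n := by
  obtain ⟨hg₁, hgn⟩ := mem_monicsOfDegree.1 hg
  have hlt : f.degree < g.degree := by rwa [degree_eq_natDegree hg₁.ne_zero, hgn]
  exact mem_monicsOfDegree.2
    ⟨hg₁.add_of_left hlt, (natDegree_add_eq_left_of_degree_lt hlt).trans hgn⟩

theorem card_monicsOfDegree_eval_eq [Finite K] [DecidableEq K] (ha : Function.Injective a) {n : ℕ}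
    (hn : Fintype.card ι ≤ n) (v : ι → K) :
    #{g ∈ monicsOfDegree K n | (fun i ↦ g.eval (a i)) = v} =
      #{g ∈ monicsOfDegree K n | (fun i ↦ g.eval (a i)) = 0} := by
  classical
  let L : K[X] := Lagrange.interpolate Finset.univ a v
  have hL (i) : L.eval (a i) = v i :=
    Lagrange.eval_interpolate_at_node v ha.injOn (Finset.mem_univ i)
  have hdeg : L.degree < n :=
    (Lagrange.degree_interpolate_lt v ha.injOn).trans_le (by exact_mod_cast hn)
  have hsub {g} (hg : g ∈ monicsOfDegree K n) : g - L ∈ monicsOfDegree K n :=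
    sub_eq_add_neg g L ▸ add_mem_monicsOfDegree hg (by rwa [degree_neg])
  refine Finset.card_nbij' (· - L) (· + L) ?_ ?_ (fun _ _ ↦ sub_add_cancel _ _)
    (fun _ _ ↦ add_sub_cancel_right _ _)
  · simp +contextual [Set.MapsTo, hsub, hL, funext_iff]
  · simp +contextual [Set.MapsTo, add_mem_monicsOfDegree, hdeg, hL, funext_iff]

theorem sum_monicsOfDegree_evalChar_eq_zero [Finite K] (ha : Function.Injective a)
    (hχ : ∃ i, χ i ≠ 1) {n : ℕ} (hn : Fintype.card ι ≤ n) :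
    ∑ g ∈ monicsOfDegree K n, evalChar χ a g = 0 := by
  classical
  have := Fintype.ofFinite K
  obtain ⟨i, hi⟩ := hχ
  have hzero : ∑ v : ι → K, ∏ i, χ i (v i) = 0 := by
    rw [← Fintype.prod_sum]
    exact Finset.prod_eq_zero (Finset.mem_univ i) (MulChar.sum_eq_zero_of_ne_one hi)
  rw [← Finset.sum_fiberwise_of_maps_to (t := Finset.univ)
    (g := fun g : K[X] ↦ fun i ↦ g.eval (a i)) fun _ _ ↦ Finset.mem_univ _]
  calc ∑ v : ι → K, ∑ g ∈ monicsOfDegree K n with (fun i ↦ g.eval (a i)) = v, evalChar χ a g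
      = ∑ v : ι → K, #{g ∈ monicsOfDegree K n | (fun i ↦ g.eval (a i)) = 0} •
          ∏ i, χ i (v i) := by
        refine Finset.sum_congr rfl fun v _ ↦ ?_
        rw [← card_monicsOfDegree_eval_eq ha hn v, ← Finset.sum_const]
        refine Finset.sum_congr rfl fun g hg ↦ ?_
        rw [evalChar_apply, ← (Finset.mem_filter.1 hg).2]
    _ = 0 := by rw [← Finset.smul_sum, hzero, smul_zero]

end LFunction

section WeilBound

theorem exists_forall_eq_pow_of_isCyclic {A ι : Type*} [CommGroup A] [Finite A] [IsCyclic A]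
    (f : ι → A) :
    ∃ (g : A) (b : ι → ℕ), (∀ i, b i ≠ 0) ∧ (∀ i, f i = g ^ b i) ∧
      ∀ n, (∀ i, f i ^ n = 1) → g ^ n = 1 := by
  obtain ⟨⟨g, hg⟩, hgen⟩ :=
    IsCyclic.exists_generator (α := Subgroup.closure (Set.range f))
  have hpow (i : ι) : ∃ b : ℕ, g ^ b = f i := by
    have hi : (⟨f i, Subgroup.subset_closure ⟨i, rfl⟩⟩ : Subgroup.closure (Set.range f)) ∈
        Submonoid.powers ⟨g, hg⟩ := mem_powers_iff_mem_zpowers.2 (hgen _)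
    obtain ⟨b, hb⟩ := hi
    exact ⟨b, congrArg Subtype.val hb⟩
  choose b hb using hpow
  refine ⟨g, fun i ↦ b i + orderOf g, fun i ↦ (Nat.add_pos_right _ (orderOf_pos g)).ne',
    fun i ↦ by rw [pow_add, pow_orderOf_eq_one, mul_one, hb], fun n hn ↦ ?_⟩
  have hker : Subgroup.closure (Set.range f) ≤ (powMonoidHom n : A →* A).ker := by
    rw [Subgroup.closure_le]
    rintro _ ⟨i, rfl⟩
    exact hn i
  exact hker hg

theorem isCyclic_mulChar (K : Type*) [Field K] [Finite K] : IsCyclic (MulChar K ℂ) :=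
  (MulChar.mulEquiv_units K ℂ).some.isCyclic.2 inferInstance

variable {K F ι : Type*} [Field K] [Field F] [Algebra K F]

/-- The multiplicative character `ψ ∘ N` of an extension field obtained from `ψ` by composition
with the norm `N`. -/
noncomputable def normChar (F : Type*) [Field F] [Algebra K F] [FiniteDimensional K F]
    (ψ : MulChar K ℂ) : MulChar F ℂ where
  toMonoidHom := ψ.toMonoidHom.comp (Algebra.norm K)
  map_nonunit' x hx := ψ.map_nonunit (by simpa using hx)

section normChar

variable [FiniteDimensional K F] {ψ : MulChar K ℂ}

theorem normChar_apply (x : F) : normChar F ψ x = ψ (Algebra.norm K x) := rfl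

theorem normChar_pow_eq_one {d : ℕ} (h : ψ ^ d = 1) : normChar F ψ ^ d = 1 := by
  ext u
  have hu : IsUnit (Algebra.norm K (u : F)) := u.isUnit.map _
  rw [MulChar.pow_apply_coe, normChar_apply, ← hu.unit_spec, ← MulChar.pow_apply_coe, h,
    MulChar.one_apply_coe, MulChar.one_apply_coe]

theorem normChar_ne_one [Finite F] (h : ψ ≠ 1) : normChar F ψ ≠ 1 := by
  have := Finite.of_injective _ (algebraMap K F).injective
  obtain ⟨u, hu⟩ := MulChar.ne_one_iff.1 h
  obtain ⟨v, rfl⟩ := FiniteField.unitsMap_norm_surjective K F u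
  exact MulChar.ne_one_iff.2 ⟨v, hu⟩

end normChar

variable [Fintype ι] {a : ι → K}

theorem rootMultiplicity_prod_C_sub_X_pow (ha : Function.Injective a) (b : ι → ℕ) (i : ι) :
    (∏ j, (C (a j) - X) ^ b j).rootMultiplicity (a i) = b i := by
  classical
  let R : K[X] := (-1) ^ b i * ∏ j ∈ Finset.univ.erase i, (C (a j) - X) ^ b j
  have hR : R.eval (a i) ≠ 0 := by
    simp only [R, eval_mul, eval_prod, eval_pow, eval_sub, eval_C, eval_X, eval_neg, eval_one]
    refine mul_ne_zero (pow_ne_zero _ (by simp)) (Finset.prod_ne_zero_iff.2 fun j hj ↦ ?_)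
    exact pow_ne_zero _ (sub_ne_zero.2 (ha.ne (Finset.ne_of_mem_erase hj)))
  have hprod : ∏ j, (C (a j) - X) ^ b j = R * (X - C (a i)) ^ b i := by
    rw [← Finset.mul_prod_erase _ _ (Finset.mem_univ i), ← neg_sub X (C (a i)), neg_pow]
    ring
  rw [hprod, rootMultiplicity_mul_X_sub_C_pow (by rintro h; simp [h] at hR),
    rootMultiplicity_eq_zero hR, zero_add]

theorem kummerPrimitive_prod_C_sub_X_pow (ha : Function.Injective a) {d : ℕ} {b : ι → ℕ}
    (hb : ∀ n, (∀ i, d ∣ n * b i) → d ∣ n) :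
    KummerPrimitive d (∏ i, (C (a i) - X) ^ b i) := fun n hn ↦
  hb n fun i ↦ rootMultiplicity_prod_C_sub_X_pow ha b i ▸ hn (a i)

theorem natDegree_prod_C_sub_X_pow_le (a : ι → K) (b : ι → ℕ) :
    (∏ i, (C (a i) - X) ^ b i).natDegree ≤ ∑ i, b i := by
  refine (natDegree_prod_le _ _).trans (Finset.sum_le_sum fun i _ ↦ ?_)
  have hlin : (C (a i) - X).natDegree ≤ 1 := by compute_degree
  simpa using natDegree_pow_le_of_le (b i) hlin

theorem norm_sum_mulChar_prod_le [Fintype K] {p μ d e w : ℕ} [ExpChar K p]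
    (hq : Fintype.card K = p ^ μ * p ^ μ) (hde : Fintype.card K = d * e + 1)
    (hw : p ^ μ = d * w + 1) (ha : Function.Injective a) {b : ι → ℕ}
    (hb : ∀ n, (∀ i, d ∣ n * b i) → d ∣ n) {θ : MulChar K ℂ} (hθ : θ ^ d = 1) (hθ₁ : θ ≠ 1) :
    ‖∑ x, θ (∏ i, (a i - x) ^ b i)‖ ≤
      (17 * d ^ 2 * (∑ i, b i + 1) + ∑ i, b i : ℕ) * (p : ℝ) ^ μ := by
  have hH₀ : ∏ i, (C (a i) - X) ^ b i ≠ 0 := Finset.prod_ne_zero_iff.2 fun i _ ↦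
    pow_ne_zero _ fun h ↦ X_sub_C_ne_zero (a i) (by rw [← neg_sub, h, neg_zero])
  have hdeg : ((∏ i, (C (a i) - X) ^ b i).natDegree : ℝ) ≤ (∑ i, b i : ℕ) :=
    mod_cast natDegree_prod_C_sub_X_pow_le a b
  have hone : (1 : ℝ) ≤ (p : ℝ) ^ μ :=
    one_le_pow₀ (mod_cast (expChar_pos K p : 0 < p))
  calc ‖∑ x, θ (∏ i, (a i - x) ^ b i)‖
      = ‖∑ x, θ ((∏ i, (C (a i) - X) ^ b i).eval x)‖ := by simp [eval_prod]
    _ ≤ 17 * d ^ 2 * ((∏ i, (C (a i) - X) ^ b i).natDegree + 1) * p ^ μ +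
          (∏ i, (C (a i) - X) ^ b i).natDegree * 1 := by
        simpa only [mul_one] using norm_sum_mulChar_eval_le hq hde hw
          (kummerPrimitive_prod_C_sub_X_pow ha hb) hH₀ hθ hθ₁
    _ ≤ 17 * d ^ 2 * ((∑ i, b i : ℕ) + 1) * p ^ μ + (∑ i, b i : ℕ) * p ^ μ := by gcongr
    _ = _ := by push_cast; ring

theorem norm_sum_mulChar_norm_prod_le [Fintype K] [Fintype F] {ψ : MulChar K ℂ} (hψ : ψ ≠ 1)
    (ha : Function.Injective a) {b : ι → ℕ}
    (hb : ∀ n, (∀ i, orderOf ψ ∣ n * b i) → orderOf ψ ∣ n) {m : ℕ}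
    (hm : Module.finrank K F = m + m) :
    ‖∑ x : F, ψ (Algebra.norm K (∏ i, (algebraMap K F (a i) - x) ^ b i))‖ ≤
      (17 * orderOf ψ ^ 2 * (∑ i, b i + 1) + ∑ i, b i : ℕ) * (Fintype.card K : ℝ) ^ m := by
  obtain ⟨p, hchar⟩ := CharP.exists K
  obtain ⟨k, hp, hk⟩ := FiniteField.card K p
  have := ExpChar.prime (R := K) hp
  have := expChar_of_injective_algebraMap (algebraMap K F).injective p
  have hpow : Fintype.card K ^ m = p ^ (k * m : ℕ) := by rw [hk, pow_mul]
  have hcard : Fintype.card F = p ^ (k * m : ℕ) * p ^ (k * m : ℕ) := by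
    rw [Module.card_eq_pow_finrank (K := K), hm, pow_add, hpow]
  obtain ⟨w, hw⟩ : orderOf ψ ∣ p ^ (k * m : ℕ) - 1 := by
    rw [← hpow]
    exact ψ.orderOf_dvd_card_sub_one.trans (by simpa using Nat.sub_dvd_pow_sub_pow _ 1 m)
  replace hw : p ^ (k * m : ℕ) = orderOf ψ * w + 1 := by
    have := Nat.one_le_pow (k * m) p hp.pos
    omega
  rw [show (Fintype.card K : ℝ) ^ m = p ^ (k * m : ℕ) by exact_mod_cast hpow]
  exact norm_sum_mulChar_prod_le (e := orderOf ψ * w ^ 2 + 2 * w) hcard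
    (by rw [hcard, hw]; ring) hw ((algebraMap K F).injective.comp ha) hb
    (normChar_pow_eq_one (pow_orderOf_eq_one ψ)) (normChar_ne_one hψ)

theorem exists_norm_sum_prod_mulChar_norm_le [Fintype K] {χ : ι → MulChar K ℂ}
    (hχ : ∃ i, χ i ≠ 1) (ha : Function.Injective a) :
    ∃ C : ℝ, ∀ (F : Type*) [Field F] [Fintype F] [Algebra K F] (m : ℕ),
      Module.finrank K F = m + m →
        ‖∑ x : F, ∏ i, χ i (Algebra.norm K (algebraMap K F (a i) - x))‖ ≤
          C * (Fintype.card K : ℝ) ^ m := by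
  have := isCyclic_mulChar K
  obtain ⟨ψ, b, hb₀, hb, hψ⟩ := exists_forall_eq_pow_of_isCyclic χ
  have hψ₁ : ψ ≠ 1 := by
    rintro rfl
    obtain ⟨i, hi⟩ := hχ
    exact hi (by rw [hb, one_pow])
  refine ⟨(17 * orderOf ψ ^ 2 * (∑ i, b i + 1) + ∑ i, b i : ℕ), fun F _ _ _ m hm ↦ ?_⟩
  have hprod (x : F) : ∏ i, χ i (Algebra.norm K (algebraMap K F (a i) - x)) =
      ψ (Algebra.norm K (∏ i, (algebraMap K F (a i) - x) ^ b i)) := by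
    simp only [map_prod, map_pow, hb, MulChar.pow_apply' _ (hb₀ _)]
  simp only [hprod]
  refine norm_sum_mulChar_norm_prod_le hψ₁ ha (fun n hn ↦ ?_) hm
  refine orderOf_dvd_of_pow_eq_one (hψ n fun i ↦ ?_)
  rw [hb, ← pow_mul, mul_comm]
  exact orderOf_dvd_iff_pow_eq_one.1 (hn i)

theorem exists_sum_vonMangoldt_mul_evalChar_eq [Finite K] {χ : ι → MulChar K ℂ}
    (hχ : ∃ i, χ i ≠ 1) (ha : Function.Injective a) :
    ∃ α : Fin (Fintype.card ι - 1) → ℂ, ∀ n ≠ 0,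
      ∑ g ∈ monicsOfDegree K n, vonMangoldt g * evalChar χ a g = -∑ i, α i ^ n := by
  refine exists_eq_neg_sum_pow_of_newton
    (c := fun n ↦ ∑ g ∈ monicsOfDegree K n, evalChar χ a g) (by simp [monicsOfDegree_zero])
    (fun n hn ↦ sum_monicsOfDegree_evalChar_eq_zero ha hχ (by omega)) fun n ↦ ?_
  rw [natCast_mul_sum_monicsOfDegree]
  refine (Finset.sum_filter_of_ne fun z hz hne ↦ ?_).symm
  have hz := Finset.HasAntidiagonal.mem_antidiagonal.1 hz
  by_contra hlt
  have hz₂ : z.2 = 0 := by omega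
  simp [hz₂, monicsOfDegree_zero, vonMangoldt_one] at hne

theorem norm_sum_prod_mulChar_sub_le [Fintype K] {χ : ι → MulChar K ℂ} (hχ : ∃ i, χ i ≠ 1)
    (ha : Function.Injective a) :
    ‖∑ x, ∏ i, χ i (a i - x)‖ ≤ (Fintype.card ι - 1 : ℕ) * √(Fintype.card K) := by
  obtain ⟨C, hC⟩ := exists_norm_sum_prod_mulChar_norm_le hχ ha
  obtain ⟨α, hα⟩ := exists_sum_vonMangoldt_mul_evalChar_eq hχ ha
  obtain ⟨p, hchar⟩ := CharP.exists K
  have : Fact p.Prime := ⟨(FiniteField.card K p).choose_spec.1⟩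
  have hsq (i) : ‖α i ^ 2‖ ≤ Fintype.card K := by
    refine norm_le_of_norm_sum_pow_le (β := fun i ↦ α i ^ 2) (C := C)
      (mod_cast Fintype.card_pos) (fun m hm ↦ ?_) i
    have : NeZero (m + m) := ⟨by omega⟩
    have := Fintype.ofFinite (FiniteField.Extension K p (m + m))
    have hrank := FiniteField.finrank_extension K p (m + m)
    have h := hC _ m hrank
    rwa [sum_prod_mulChar_norm, hrank, hα _ (NeZero.ne _), norm_neg, Finset.sum_congr rfl fun i _ ↦
      show α i ^ (m + m) = (α i ^ 2) ^ m by ring] at h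
  have hK : ∑ x, ∏ i, χ i (a i - x) = -∑ i, α i := by
    simpa [hα] using sum_prod_mulChar_norm (F := K) (χ := χ) (a := a)
  rw [hK, norm_neg]
  calc ‖∑ i, α i‖ ≤ ∑ i, ‖α i‖ := norm_sum_le _ _
    _ ≤ ∑ _i : Fin (Fintype.card ι - 1), √(Fintype.card K) :=
        Finset.sum_le_sum fun i _ ↦ Real.le_sqrt_of_sq_le (norm_pow (α i) 2 ▸ hsq i)
    _ = (Fintype.card ι - 1 : ℕ) * √(Fintype.card K) := by simp

end WeilBound

section Counting

open scoped Finset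

variable {K ι : Type*} [Field K] {ψ : MulChar K ℂ}

theorem card_mul_index_eq (G : Subgroup Kˣ) : Nat.card G * G.index = Nat.card K - 1 := by
  rw [G.card_mul_index, Nat.card_units]

theorem exists_mulChar_orderOf_eq_index [Finite K] (G : Subgroup Kˣ) :
    ∃ ψ : MulChar K ℂ, orderOf ψ = G.index := by
  have := Fintype.ofFinite K
  refine MulChar.exists_mulChar_orderOf K (Dvd.intro_left (Nat.card G) ?_)
    (Complex.isPrimitiveRoot_exp _ G.index_ne_zero_of_finite)
  rw [card_mul_index_eq, Nat.card_eq_fintype_card]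

theorem mem_of_mulChar_apply_eq_one [Finite K] {G : Subgroup Kˣ} (hψ : orderOf ψ = G.index) {u : Kˣ}
    (hu : ψ u = 1) : u ∈ G := by
  obtain ⟨γ, hγ⟩ := IsCyclic.exists_generator (α := Kˣ)
  obtain ⟨n, rfl⟩ := mem_powers_iff_mem_zpowers.2 (hγ u)
  have hpow : ψ ^ n = 1 := MulChar.ext fun a ↦ by
    obtain ⟨k, rfl⟩ := mem_powers_iff_mem_zpowers.2 (hγ a)
    rw [MulChar.pow_apply_coe, MulChar.one_apply_coe, ← map_pow, ← Units.val_pow_eq_pow_val,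
      pow_right_comm, Units.val_pow_eq_pow_val, map_pow, hu, one_pow]
  obtain ⟨m, rfl⟩ : G.index ∣ n := hψ ▸ orderOf_dvd_of_pow_eq_one hpow
  rw [mul_comm] at *
  simpa only [pow_mul] using G.pow_index_mem (γ ^ m)

theorem sum_range_orderOf_pow_apply (y : K) :
    ∑ j ∈ Finset.range (orderOf ψ), (ψ ^ j) y = if ψ y = 1 then (orderOf ψ : ℂ) else 0 := by
  by_cases hy : IsUnit y
  · obtain ⟨u, rfl⟩ := hy
    have hroot : ψ u ^ orderOf ψ = 1 := by
      rw [← MulChar.pow_apply_coe, pow_orderOf_eq_one, MulChar.one_apply_coe]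
    simp only [MulChar.pow_apply_coe]
    split_ifs with h
    · simp [h]
    · rw [geom_sum_eq h, hroot, sub_self, zero_div]
  · simp [MulChar.map_nonunit _ hy]

variable [Fintype K] [Fintype ι]

theorem sum_sum_prod_pow_apply [DecidableEq ι] (f : ι → K → K)
    [DecidablePred fun x ↦ ∀ i, ψ (f i x) = 1] :
    ∑ j ∈ Fintype.piFinset fun _ : ι ↦ Finset.range (orderOf ψ), ∑ x, ∏ i, (ψ ^ j i) (f i x) =
      (orderOf ψ : ℂ) ^ Fintype.card ι * #{x | ∀ i, ψ (f i x) = 1} := by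
  rw [Finset.sum_comm, Finset.card_filter, Nat.cast_sum, Finset.mul_sum]
  refine Finset.sum_congr rfl fun x _ ↦ ?_
  rw [← Finset.prod_univ_sum (fun _ ↦ Finset.range (orderOf ψ)) fun i j ↦ (ψ ^ j) (f i x)]
  simp only [sum_range_orderOf_pow_apply]
  split_ifs with h
  · simp [h]
  · obtain ⟨i, hi⟩ := not_forall.1 h
    simpa using Finset.prod_eq_zero (Finset.mem_univ i) (if_neg hi)

theorem sum_prod_one_apply (f : ι → K → K) [DecidablePred fun x ↦ ∀ i, f i x ≠ 0] :
    ∑ x, ∏ i, (1 : MulChar K ℂ) (f i x) = #{x | ∀ i, f i x ≠ 0} := by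
  rw [Finset.card_filter, Nat.cast_sum]
  refine Finset.sum_congr rfl fun x _ ↦ ?_
  split_ifs with h
  · simpa using Finset.prod_eq_one fun i _ ↦ MulChar.one_apply (h i).isUnit
  · obtain ⟨i, hi⟩ := not_forall_not.1 h
    simpa using Finset.prod_eq_zero (Finset.mem_univ i) (hi ▸ MulChar.map_zero _)

variable {t : ι → K}

theorem norm_sum_prod_mulChar_one_add_mul_le {χ : ι → MulChar K ℂ} (hχ : ∃ i, χ i ≠ 1)
    (ht : Function.Injective t) (ht₀ : ∀ i, t i ≠ 0) :
    ‖∑ x, ∏ i, χ i (1 + t i * x)‖ ≤ (Fintype.card ι - 1 : ℕ) * √(Fintype.card K) := by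
  have hfactor (x : K) : ∏ i, χ i (1 + t i * x) =
      (∏ i, χ i (-t i)) * ∏ i, χ i (-(t i)⁻¹ - x) := by
    rw [← Finset.prod_mul_distrib]
    refine Finset.prod_congr rfl fun i _ ↦ ?_
    rw [← map_mul, mul_sub, neg_mul_neg, mul_inv_cancel₀ (ht₀ i), neg_mul, sub_neg_eq_add]
  have hnorm : ‖∏ i, χ i (-t i)‖ = 1 := by
    rw [norm_prod]
    refine Finset.prod_eq_one fun i _ ↦ ?_
    exact norm_mulChar_apply_unit (χ i) (Units.mk0 _ (neg_ne_zero.2 (ht₀ i)))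
  simp only [hfactor]
  rw [← Finset.mul_sum, norm_mul, hnorm, one_mul]
  exact norm_sum_prod_mulChar_sub_le hχ fun i j hij ↦ ht (inv_injective (neg_injective hij))

theorem card_le_card_forall_one_add_mul_ne_zero_add [DecidableEq K] (t : ι → K) :
    Fintype.card K ≤ #{x | ∀ i, 1 + t i * x ≠ 0} + Fintype.card ι := by
  have hsub : ({x | ∀ i, 1 + t i * x ≠ 0} : Finset K)ᶜ ⊆ Finset.univ.image fun i ↦ -(t i)⁻¹ := by
    intro x hx
    obtain ⟨i, hi⟩ : ∃ i, 1 + t i * x = 0 := by simpa using hx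
    refine Finset.mem_image.2 ⟨i, Finset.mem_univ i, ?_⟩
    rw [← inv_neg, inv_eq_of_mul_eq_one_right]
    linear_combination -hi
  have hcompl := Finset.card_add_card_compl ({x | ∀ i, 1 + t i * x ≠ 0} : Finset K)
  have himage := (Finset.card_le_card hsub).trans Finset.card_image_le
  rw [Finset.card_univ] at himage
  omega

theorem abs_orderOf_pow_mul_card_sub_card_le [DecidableEq K] (ψ : MulChar K ℂ)
    (ht : Function.Injective t) (ht₀ : ∀ i, t i ≠ 0)
    [DecidablePred fun x ↦ ∀ i, ψ (1 + t i * x) = 1] :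
    |(orderOf ψ : ℝ) ^ Fintype.card ι * #{x | ∀ i, ψ (1 + t i * x) = 1} -
        #{x | ∀ i, 1 + t i * x ≠ 0}| ≤
      (orderOf ψ ^ Fintype.card ι - 1) * (Fintype.card ι * √(Fintype.card K)) := by
  classical
  let J : Finset (ι → ℕ) := Fintype.piFinset fun _ ↦ Finset.range (orderOf ψ)
  let S (j : ι → ℕ) : ℂ := ∑ x, ∏ i, (ψ ^ j i) (1 + t i * x)
  have hJ₀ : 0 ∈ J := Fintype.mem_piFinset.2 fun _ ↦ Finset.mem_range.2 (orderOf_pos ψ)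
  have hJ : #J = orderOf ψ ^ Fintype.card ι := by simp [J]
  have hS (j) (hj : j ∈ J.erase 0) : ‖S j‖ ≤ Fintype.card ι * √(Fintype.card K) := by
    obtain ⟨hj₀, hjJ⟩ := Finset.mem_erase.1 hj
    obtain ⟨i, hi⟩ := Function.ne_iff.1 hj₀
    have hχ : ψ ^ j i ≠ 1 := fun h ↦ hi (Nat.eq_zero_of_dvd_of_lt (orderOf_dvd_of_pow_eq_one h)
      (Finset.mem_range.1 (Fintype.mem_piFinset.1 hjJ i)))
    refine (norm_sum_prod_mulChar_one_add_mul_le ⟨i, hχ⟩ ht ht₀).trans ?_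
    gcongr
    exact Nat.sub_le _ _
  have hsum : ∑ j ∈ J.erase 0, S j = (orderOf ψ : ℂ) ^ Fintype.card ι *
      #{x | ∀ i, ψ (1 + t i * x) = 1} - #{x | ∀ i, 1 + t i * x ≠ 0} := by
    rw [← sum_sum_prod_pow_apply, ← sum_prod_one_apply, Finset.sum_erase_eq_sub hJ₀]
    simp only [S, Pi.zero_apply, pow_zero, J]
  have hcard : (#(J.erase 0) : ℝ) = orderOf ψ ^ Fintype.card ι - 1 := by
    rw [Finset.cast_card_erase_of_mem hJ₀, hJ, Nat.cast_pow]
  calc _ = ‖∑ j ∈ J.erase 0, S j‖ := by rw [hsum, ← Real.norm_eq_abs, ← Complex.norm_real]; simp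
    _ ≤ ∑ _j ∈ J.erase 0, Fintype.card ι * √(Fintype.card K) := norm_sum_le_of_le _ hS
    _ = _ := by rw [Finset.sum_const, nsmul_eq_mul, hcard]

theorem card_le_orderOf_pow_mul (ψ : MulChar K ℂ) (ht : Function.Injective t)
    (ht₀ : ∀ i, t i ≠ 0) [DecidablePred fun x ↦ ∀ i, ψ (1 + t i * x) = 1] :
    (Fintype.card K : ℝ) ≤ orderOf ψ ^ Fintype.card ι *
      (#{x | ∀ i, ψ (1 + t i * x) = 1} + Fintype.card ι * √(Fintype.card K)) := by
  classical
  have hcard : (Fintype.card K : ℝ) ≤ #{x | ∀ i, 1 + t i * x ≠ 0} + Fintype.card ι :=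
    mod_cast card_le_card_forall_one_add_mul_ne_zero_add t
  have herror := (abs_le.1 (abs_orderOf_pow_mul_card_sub_card_le ψ ht ht₀)).1
  have hsqrt : (Fintype.card ι : ℝ) ≤ Fintype.card ι * √(Fintype.card K) :=
    le_mul_of_one_le_right (Nat.cast_nonneg _)
      (Real.one_le_sqrt.2 (mod_cast Fintype.card_pos))
  linarith

theorem card_div_card_sub_one_eq (G : Subgroup Kˣ) :
    (Nat.card G : ℝ) / (Fintype.card K - 1) = (G.index : ℝ)⁻¹ := by
  have hindex : (G.index : ℝ) ≠ 0 := mod_cast G.index_ne_zero_of_finite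
  have hG : (Nat.card G : ℝ) ≠ 0 := mod_cast Nat.card_pos.ne'
  have hcard : (Fintype.card K : ℝ) - 1 = Nat.card G * G.index := by
    rw [← Nat.cast_mul, card_mul_index_eq, Nat.card_eq_fintype_card,
      Nat.cast_pred Fintype.card_pos]
  rw [hcard]
  field_simp

theorem inv_index_pow_mul_card_sub_le (G : Subgroup Kˣ) {T : Finset K} (hT : 0 ∉ T) :
    (G.index : ℝ)⁻¹ ^ #T * Fintype.card K - #T * √(Fintype.card K) ≤
      Nat.card {x : K // ∀ s ∈ T, 1 + s * x ∈ Units.val '' (G : Set Kˣ)} := by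
  classical
  obtain ⟨ψ, hψ⟩ := exists_mulChar_orderOf_eq_index G
  have hcount : #{x | ∀ s : T, ψ (1 + s * x) = 1} ≤
      Nat.card {x : K // ∀ s ∈ T, 1 + s * x ∈ Units.val '' (G : Set Kˣ)} := by
    rw [Nat.card_eq_fintype_card, Fintype.card_subtype]
    refine Finset.card_le_card fun x hx ↦ ?_
    rw [Finset.mem_filter_univ] at hx ⊢
    intro s hs
    have hψs : ψ (1 + s * x) = 1 := hx ⟨s, hs⟩
    obtain ⟨u, hu⟩ : IsUnit (1 + s * x) := by
      by_contra h
      exact zero_ne_one ((ψ.map_nonunit h).symm.trans hψs)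
    exact ⟨u, mem_of_mulChar_apply_eq_one hψ (hu ▸ hψs), hu⟩
  have hbound := card_le_orderOf_pow_mul ψ (t := ((↑) : T → K)) Subtype.val_injective
    fun s hs ↦ hT (hs ▸ s.2)
  have hindex : (0 : ℝ) < G.index ^ #T := pow_pos (mod_cast G.index_ne_zero_of_finite.bot_lt) _
  rw [hψ, Fintype.card_coe, ← inv_mul_le_iff₀ hindex, ← inv_pow] at hbound
  rw [sub_le_iff_le_add]
  exact hbound.trans (by gcongr)

end Counting

end ShiftedProgression

open ShiftedProgression in
theorem count_shifted_progression_points_general {K ι : Type*} [Field K] [Fintype K] (t : ι → K)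
    (S : Finset ι) (G : Subgroup Kˣ) :
    (Nat.card {x : K // ∀ s ∈ S, 1 + t s * x ∈ Units.val '' (G : Set Kˣ)} : ℝ) ≥
      ((Nat.card G : ℝ) / ((Fintype.card K : ℝ) - 1)) ^ S.card * (Fintype.card K : ℝ) -
        S.card * √(Fintype.card K) := by
  classical
  let T := (S.image t).erase 0
  have hTS : T.card ≤ S.card := (Finset.card_erase_le).trans Finset.card_image_le
  have hcount : Nat.card {x : K // ∀ s ∈ T, 1 + s * x ∈ Units.val '' (G : Set Kˣ)} ≤
      Nat.card {x : K // ∀ s ∈ S, 1 + t s * x ∈ Units.val '' (G : Set Kˣ)} := by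
    refine Nat.card_mono (Set.toFinite _) fun x hx s hs ↦ ?_
    obtain h | h := eq_or_ne (t s) 0
    · exact ⟨1, G.one_mem, by simp [h]⟩
    · exact hx _ (Finset.mem_erase.2 ⟨h, Finset.mem_image_of_mem t hs⟩)
  have hindex : (G.index : ℝ)⁻¹ ≤ 1 :=
    inv_le_one_of_one_le₀ (mod_cast G.index_ne_zero_of_finite.bot_lt)
  rw [card_div_card_sub_one_eq]
  calc (Nat.card {x : K // ∀ s ∈ S, 1 + t s * x ∈ Units.val '' (G : Set Kˣ)} : ℝ)
      ≥ Nat.card {x : K // ∀ s ∈ T, 1 + s * x ∈ Units.val '' (G : Set Kˣ)} := mod_cast hcount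
    _ ≥ (G.index : ℝ)⁻¹ ^ T.card * Fintype.card K - T.card * √(Fintype.card K) :=
        inv_index_pow_mul_card_sub_le G (Finset.notMem_erase 0 _)
    _ ≥ _ := by
        have hpow := pow_le_pow_of_le_one (by positivity) hindex hTS
        gcongr

/-- For a prime `p`, `0 < r < p`, and a subgroup `G ≤ 𝔽_p^*`, the number of `x ∈ 𝔽_p` with
`1 + s·x ∈ G` for all `s = 1, …, r` is at least `(|G|/(p-1))^r·p - r·√p`. -/
theorem count_shifted_progression_points (p : ℕ) [Fact p.Prime] (r : ℕ) (hr : 0 < r)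
    (hrp : r < p) (G : Subgroup (ZMod p)ˣ) :
    (Nat.card {x : ZMod p // ∀ s : ℕ, 1 ≤ s → s ≤ r →
        1 + (s : ZMod p) * x ∈ Units.val '' (G : Set (ZMod p)ˣ)} : ℝ) ≥
      ((Nat.card G : ℝ) / ((p : ℝ) - 1)) ^ r * (p : ℝ) - (r : ℝ) * Real.sqrt p := by
  simpa only [Finset.mem_Icc, and_imp, Nat.card_Icc, add_tsub_cancel_right, ZMod.card] using
    count_shifted_progression_points_general (fun s : ℕ ↦ (s : ZMod p)) (Finset.Icc 1 r) G
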